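/- arXiv:0911.0375 — 7 statements merged into one kernel-verified Lean document; each statement's English description precedes it below -/
import Mathlib

section
/- Let n ≥ 1 and 1 ≤ k ≤ n. Let A and B be n×n real symmetric matrices such that σ_j(A) > 0 for every j with 1 ≤ j ≤ k. Define p : ℝ → ℝ by p(t) = σ_k(A + t·B) (a polynomial in t). Then p(0)·p''(0) ≤ ((k−1)/k)·(p'(0))², where p' and p'' denote the first and second derivatives of p. -/
open Matrix

/-- `σ_k` of a real Hermitian (= symmetric) matrix: the `k`-th elementary symmetric
polynomial of its eigenvalues, counted with multiplicity. -/
noncomputable def sigmaEig {n : ℕ} {A : Matrix (Fin n) (Fin n) ℝ}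
    (hA : A.IsHermitian) (k : ℕ) : ℝ :=
  (Finset.univ.val.map hA.eigenvalues).esymm k

lemma isHermitian_smul_real {n : ℕ} {B : Matrix (Fin n) (Fin n) ℝ}
    (hB : B.IsHermitian) (t : ℝ) : (t • B).IsHermitian := by
  unfold Matrix.IsHermitian at *
  rw [Matrix.conjTranspose_smul, hB]
  simp

/-!
Write `F_j(s) = σ_j(s A + B)`, a polynomial of degree `j` with leading coefficient `σ_j(A)`. At a
zero of `F_{j+1}`, Newton's inequality for the eigenvalues of `s A + B` gives `F_j F_{j+2} < 0`, so
`F_0, …, F_k` is a Sturm chain of polynomials with positive leading coefficients and each `F_j` has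
only real roots. Then so has `p(t) = σ_k(A + t B) = t^k F_k(1/t)`, and the claim is Laguerre's
inequality `k p p'' ≤ (k - 1) p'²` for real-rooted polynomials of degree at most `k`. Newton's
inequality is strict only if `s A + B` has enough nonzero eigenvalues, so first adjoin `k`
eigenvalues `ε`, and let `ε → 0` at the end.
-/

open Polynomial

lemma eval_divByMonic_X_sub_C {R : Type*} [CommRing R] (f : R[X]) (r : R) :
    (f /ₘ (X - C r)).eval r = (derivative f).eval r := by
  rw [← divByMonic_add_X_sub_C_mul_derivative_divByMonic_eq_derivative f r]
  simp

section Domain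

variable {R : Type*} [CommRing R] [IsDomain R] {f : R[X]}

lemma natDegree_iterate_derivative_ne_zero [CharZero R] {j : ℕ} (hj : j < f.natDegree) :
    (derivative^[j] f).natDegree ≠ 0 := by
  refine (Nat.sub_pos_of_lt hj).trans_le (le_natDegree_of_ne_zero ?_) |>.ne'
  have hf : f ≠ 0 := ne_zero_of_natDegree_gt hj
  simp [coeff_iterate_derivative, Nat.sub_add_cancel hj.le, hf, Nat.descFactorial_eq_zero_iff_lt,
    hj.le]

lemma sub_ne_zero_of_eval_ne_zero [DecidableEq R] {x : R} (hx : f.eval x ≠ 0) (r : f.roots) :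
    x - r ≠ 0 := fun h ↦
  hx (sub_eq_zero.1 h ▸ isRoot_of_mem_roots (Multiset.coe_mem (x := r)))

lemma nodup_roots_of_derivative_ne_zero (h : ∀ r, f.IsRoot r → (derivative f).eval r ≠ 0) :
    f.roots.Nodup := by
  classical
  refine Multiset.nodup_iff_count_le_one.2 fun r ↦ ?_
  rw [count_roots]
  by_contra! hlt
  have hf0 : f ≠ 0 := by rintro rfl; simp at hlt
  have := (one_lt_rootMultiplicity_iff_isRoot hf0).1 hlt
  exact h r this.1 this.2

end Domain

section Field

variable {K : Type*} [Field K] {f : K[X]}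

lemma eval_derivative_eq_eval_mul_sum_roots [DecidableEq K] (hf : f.Splits) {x : K}
    (hx : f.eval x ≠ 0) :
    (derivative f).eval x = f.eval x * ∑ r : f.roots, (x - r)⁻¹ := by
  rw [hf.eval_derivative_eq_eval_mul_sum hx, ← Multiset.map_univ]
  simp only [one_div]
  rfl

lemma splits_reverse (hf : f.Splits) : f.reverse.Splits := by
  rw [hf.eq_prod_roots, reverse_mul_of_domain, reverse_C]
  refine .mul (.C _) ?_
  induction f.roots using Multiset.induction with
  | empty =>
    rw [Multiset.map_zero, Multiset.prod_zero, ← C_1, reverse_C]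
    exact .C 1
  | cons r s ih =>
    rw [Multiset.map_cons, Multiset.prod_cons, reverse_mul_of_domain]
    refine .mul (.of_natDegree_le_one ?_) ih
    exact (reverse_natDegree_le _).trans (natDegree_X_sub_C r).le

lemma exists_eq_mul_add_sum_divByMonic [DecidableEq K] (hf : f.Splits) (hf0 : f ≠ 0)
    (hsimple : ∀ r, f.IsRoot r → (derivative f).eval r ≠ 0) (g : K[X]) :
    ∃ h, g = h * f +
      ∑ r ∈ f.roots.toFinset, C (g.eval r / (derivative f).eval r) * (f /ₘ (X - C r)) := by
  set S := ∑ r ∈ f.roots.toFinset, C (g.eval r / (derivative f).eval r) * (f /ₘ (X - C r))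
  have agree {r : K} (hr : f.IsRoot r) : S.eval r = g.eval r := by
    rw [eval_finsetSum, Finset.sum_eq_single_of_mem r (by simpa [hf0] using hr)]
    · rw [eval_C_mul, eval_divByMonic_X_sub_C, div_mul_cancel₀ _ (hsimple r hr)]
    · intro s hs hsr
      have hfs := mul_divByMonic_eq_iff_isRoot.2 (isRoot_of_mem_roots (Multiset.mem_toFinset.1 hs))
      have hprod : (r - s) * (f /ₘ (X - C s)).eval r = 0 := by
        simpa [hr.eq_zero] using congrArg (eval r) hfs
      rw [eval_C_mul, (mul_eq_zero.1 hprod).resolve_left (sub_ne_zero.2 hsr.symm), mul_zero]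
  have hdvd : f ∣ g - S := by
    by_cases hgS : g - S = 0
    · simp [hgS]
    refine hf.dvd_of_roots_le_roots hf0 ?_
    refine (Multiset.le_iff_subset (nodup_roots_of_derivative_ne_zero hsimple)).2 fun r hr ↦ ?_
    simp [hgS, agree (isRoot_of_mem_roots hr)]
  obtain ⟨h, hh⟩ := hdvd
  exact ⟨h, by rw [mul_comm h, ← hh, sub_add_cancel]⟩

lemma degree_sum_divByMonic_lt (hf0 : f ≠ 0) (s : Finset K) (c : K → K) :
    (∑ r ∈ s, C (c r) * (f /ₘ (X - C r))).degree < f.degree := by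
  refine (degree_sum_le _ _).trans_lt
    ((Finset.sup_lt_iff (bot_lt_iff_ne_bot.2 (degree_ne_bot.2 hf0))).2 fun r _ ↦ ?_)
  rw [← smul_eq_C_mul]
  exact (degree_smul_le _ _).trans_lt (degree_divByMonic_lt f _ hf0 (by simp))

end Field

section RealRooted

variable {f : ℝ[X]}

lemma splits_derivative (hf : f.Splits) : (derivative f).Splits := by
  rw [splits_iff_card_roots] at *
  have := card_roots_le_derivative f
  have := natDegree_derivative_le f
  have := card_roots' (derivative f)
  omega

lemma splits_iterate_derivative (hf : f.Splits) (j : ℕ) : (derivative^[j] f).Splits :=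
  Function.Iterate.rec Splits hf (fun _ ↦ splits_derivative) j

lemma eval_mul_eval_derivative_derivative_eq (hf : f.Splits) {x : ℝ} (hx : f.eval x ≠ 0) :
    f.eval x * (derivative (derivative f)).eval x =
      (derivative f).eval x ^ 2 - f.eval x ^ 2 * ∑ r : f.roots, (x - r)⁻¹ ^ 2 := by
  have hlog : (derivative f).eval =ᶠ[nhds x] fun y ↦ f.eval y * ∑ r : f.roots, (y - r)⁻¹ := by
    filter_upwards [f.continuous.continuousAt.eventually_ne hx] with y hy
    exact eval_derivative_eq_eval_mul_sum_roots hf hy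
  have hsum : HasDerivAt (fun y : ℝ ↦ ∑ r : f.roots, (y - (r : ℝ))⁻¹)
      (∑ r : f.roots, -(x - (r : ℝ))⁻¹ ^ 2) x := by
    refine HasDerivAt.fun_sum fun r _ ↦ ?_
    simpa [neg_div] using
      ((hasDerivAt_id x).sub_const (r : ℝ)).fun_inv (sub_ne_zero_of_eval_ne_zero hx r)
  have hproduct := ((derivative f).hasDerivAt x).unique
    (((f.hasDerivAt x).mul hsum).congr_of_eventuallyEq hlog)
  rw [hproduct, Finset.sum_neg_distrib, eval_derivative_eq_eval_mul_sum_roots hf hx]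
  ring

lemma eval_mul_eval_derivative_derivative_lt (hf : f.Splits) {x : ℝ}
    (hx : f.eval x ≠ 0) (hdeg : f.natDegree ≠ 0) :
    f.eval x * (derivative (derivative f)).eval x < (derivative f).eval x ^ 2 := by
  rw [eval_mul_eval_derivative_derivative_eq hf hx, sub_lt_self_iff]
  have : Nonempty f.roots := by
    rw [← Fintype.card_pos_iff, Multiset.card_coe, ← hf.natDegree_eq_card_roots]
    omega
  have : 0 < ∑ r : f.roots, (x - r)⁻¹ ^ 2 :=
    Finset.sum_pos
      (fun r _ ↦ sq_pos_of_ne_zero (inv_ne_zero (sub_ne_zero_of_eval_ne_zero hx r)))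
      Finset.univ_nonempty
  positivity

/-- The gap in Laguerre's inequality `n f f'' ≤ (n - 1) f'²` at `x`, which holds for real-rooted `f`
of degree at most `n`. -/
noncomputable def laguerreGap (n : ℕ) (f : ℝ[X]) (x : ℝ) : ℝ :=
  (n - 1) * (derivative f).eval x ^ 2 - n * (f.eval x * (derivative (derivative f)).eval x)

lemma laguerreGap_zero_eq (n : ℕ) (f : ℝ[X]) :
    laguerreGap n f 0 = (n - 1) * f.coeff 1 ^ 2 - n * (f.coeff 0 * (2 * f.coeff 2)) := by
  simp [laguerreGap, ← coeff_zero_eq_eval_zero, coeff_derivative, mul_comm, one_add_one_eq_two]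

lemma laguerreGap_nonneg (hf : f.Splits) {x : ℝ} (hx : f.eval x ≠ 0) {n : ℕ}
    (hn : f.natDegree ≤ n) : 0 ≤ laguerreGap n f x := by
  have cauchy_schwarz : (∑ r : f.roots, (x - r)⁻¹) ^ 2 ≤ n * ∑ r : f.roots, (x - r)⁻¹ ^ 2 := by
    refine sq_sum_le_card_mul_sum_sq.trans ?_
    gcongr
    rwa [Finset.card_univ, Multiset.card_coe, ← hf.natDegree_eq_card_roots]
  rw [laguerreGap, eval_mul_eval_derivative_derivative_eq hf hx,
    eval_derivative_eq_eval_mul_sum_roots hf hx]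
  linarith [mul_le_mul_of_nonneg_left cauchy_schwarz (sq_nonneg (f.eval x))]

lemma coeff_mul_coeff_add_two_neg (hf : f.Splits) {j : ℕ} (hj : j < f.natDegree)
    (h0 : f.coeff j ≠ 0) (h1 : f.coeff (j + 1) = 0) : f.coeff j * f.coeff (j + 2) < 0 := by
  have hfact (i : ℕ) : (derivative^[i] f).eval 0 = i.factorial * f.coeff i := by
    rw [← coeff_zero_eq_eval_zero, coeff_iterate_derivative]
    simp [Nat.descFactorial_self]
  have laguerre := eval_mul_eval_derivative_derivative_lt
    (splits_iterate_derivative hf j) (x := 0) (by simp [hfact, h0, Nat.factorial_ne_zero])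
    (natDegree_iterate_derivative_ne_zero hj)
  simp only [← Function.iterate_succ_apply' derivative, hfact, h1] at laguerre
  have : 0 < ((j.factorial * (j + 2).factorial : ℕ) : ℝ) := by positivity
  refine neg_of_mul_neg_right (a := ((j.factorial * (j + 2).factorial : ℕ) : ℝ)) ?_ this.le
  push_cast
  linarith

lemma coeff_ne_zero_or_coeff_succ_ne_zero (hf : f.Splits) (h0 : f.coeff 0 ≠ 0) {j : ℕ}
    (hj : j < f.natDegree) : f.coeff j ≠ 0 ∨ f.coeff (j + 1) ≠ 0 := by
  induction j with
  | zero => exact .inl h0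
  | succ j ih =>
    by_cases h1 : f.coeff (j + 1) = 0
    · have hne : f.coeff j ≠ 0 := (ih (by omega)).resolve_right (not_not.2 h1)
      exact .inr (right_ne_zero_of_mul (coeff_mul_coeff_add_two_neg hf (by omega) hne h1).ne)
    · exact .inl h1

end RealRooted

section Herglotz

variable {f : ℝ[X]} {a : ℝ} {m : ℝ → ℝ}

/-- The polynomial `g` with `g / f = a X + b - ∑ r, m r / (X - r)`, the sum being over the distinct
roots `r` of `f`. For `a, m r > 0` the quotient `g / f` maps the upper half plane to itself. -/
noncomputable def herglotzNumerator (f : ℝ[X]) (a b : ℝ) (m : ℝ → ℝ) : ℝ[X] :=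
  (C a * X + C b) * f - ∑ r ∈ f.roots.toFinset, C (m r) * (f /ₘ (X - C r))

-- The Bézoutian: `y = conj x` rules out non-real roots of the numerator, and differentiating at
-- `x = y` gives the Wronskian.
lemma aeval_herglotzNumerator_mul_sub {S : Type*} [CommRing S] [Algebra ℝ S] (f : ℝ[X])
    (a b : ℝ) (m : ℝ → ℝ) (x y : S) :
    aeval x (herglotzNumerator f a b m) * aeval y f -
        aeval x f * aeval y (herglotzNumerator f a b m) =
      (x - y) * (a • (aeval x f * aeval y f) +
        ∑ r ∈ f.roots.toFinset, m r • (aeval x (f /ₘ (X - C r)) * aeval y (f /ₘ (X - C r)))) := by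
  have factor {r : ℝ} (hr : r ∈ f.roots.toFinset) (z : S) :
      aeval z f = (z - algebraMap ℝ S r) * aeval z (f /ₘ (X - C r)) := by
    have hfr := mul_divByMonic_eq_iff_isRoot.2 (isRoot_of_mem_roots (Multiset.mem_toFinset.1 hr))
    simpa using (congrArg (aeval z) hfr).symm
  have summand {r : ℝ} (hr : r ∈ f.roots.toFinset) :
      aeval x f * (m r • aeval y (f /ₘ (X - C r))) - m r • aeval x (f /ₘ (X - C r)) * aeval y f =
        (x - y) * (m r • (aeval x (f /ₘ (X - C r)) * aeval y (f /ₘ (X - C r)))) := by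
    rw [factor hr x, factor hr y]
    simp only [Algebra.smul_def]
    ring
  rw [mul_add, Finset.mul_sum, ← Finset.sum_congr rfl fun r hr ↦ summand hr,
    Finset.sum_sub_distrib, ← Finset.mul_sum, ← Finset.sum_mul]
  simp only [herglotzNumerator, map_sub, map_mul, map_add, map_sum, aeval_X, aeval_C,
    Algebra.smul_def]
  ring

lemma eval_mul_eval_derivative_herglotzNumerator (f : ℝ[X]) (a b : ℝ) (m : ℝ → ℝ) (x : ℝ) :
    f.eval x * (derivative (herglotzNumerator f a b m)).eval x -
        (derivative f).eval x * (herglotzNumerator f a b m).eval x =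
      a * f.eval x ^ 2 + ∑ r ∈ f.roots.toFinset, m r * (f /ₘ (X - C r)).eval x ^ 2 := by
  have hX := aeval_herglotzNumerator_mul_sub f a b m (X : ℝ[X]) (C x)
  have hconst (p : ℝ[X]) : aeval (C x) p = C (p.eval x) :=
    aeval_algebraMap_apply_eq_algebraMap_eval x p
  simp only [aeval_X_left_apply, hconst] at hX
  have hderiv := congrArg (fun p ↦ (derivative p).eval x) hX
  simp only [derivative_sub, derivative_mul, derivative_C, derivative_X, eval_add, eval_sub,
    eval_mul, eval_C, eval_X, eval_smul, eval_finsetSum, eval_one, eval_zero, smul_eq_mul] at hderiv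
  simp only [sq]
  linarith

lemma splits_herglotzNumerator (hf : f.Splits) (hf0 : f ≠ 0) (ha : 0 < a)
    (hm : ∀ r, f.IsRoot r → 0 < m r) (b : ℝ) : (herglotzNumerator f a b m).Splits := by
  refine .of_splits_map (algebraMap ℝ ℂ) (IsAlgClosed.splits _) fun z hz ↦ ?_
  have hgz : aeval z (herglotzNumerator f a b m) = 0 := by
    simpa [eval_map_algebraMap] using isRoot_of_mem_roots hz
  by_contra hzreal
  have hfz : aeval z f ≠ 0 := fun h ↦
    hzreal (hf.mem_range_of_isRoot hf0 (by simpa [eval_map_algebraMap] using h))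
  have hkernel := aeval_herglotzNumerator_mul_sub f a b m z (starRingEnd ℂ z)
  simp only [aeval_conj, hgz, map_zero, zero_mul, mul_zero, sub_zero, Complex.mul_conj,
    Complex.real_smul] at hkernel
  have hz_ne_conj : z - starRingEnd ℂ z ≠ 0 := by
    intro h
    exact hzreal ⟨z.re, Complex.conj_eq_iff_re.1 (sub_eq_zero.1 h).symm⟩
  have hzero := (mul_eq_zero.1 hkernel.symm).resolve_left hz_ne_conj
  norm_cast at hzero
  have : 0 < a * Complex.normSq (aeval z f) := mul_pos ha (Complex.normSq_pos.2 hfz)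
  have : 0 ≤ ∑ r ∈ f.roots.toFinset, m r * Complex.normSq (aeval z (f /ₘ (X - C r))) :=
    Finset.sum_nonneg fun r hr ↦ mul_nonneg
      (hm r (isRoot_of_mem_roots (Multiset.mem_toFinset.1 hr))).le (Complex.normSq_nonneg _)
  linarith

lemma eval_mul_eval_derivative_herglotzNumerator_pos (ha : 0 < a)
    (hm : ∀ r, f.IsRoot r → 0 < m r) (b : ℝ) {x : ℝ} (hfx : f.eval x ≠ 0)
    (hx : (herglotzNumerator f a b m).IsRoot x) :
    0 < f.eval x * (derivative (herglotzNumerator f a b m)).eval x := by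
  have hwronskian := eval_mul_eval_derivative_herglotzNumerator f a b m x
  rw [hx.eq_zero, mul_zero, sub_zero] at hwronskian
  rw [hwronskian]
  have : 0 ≤ ∑ r ∈ f.roots.toFinset, m r * (f /ₘ (X - C r)).eval x ^ 2 :=
    Finset.sum_nonneg fun r hr ↦ mul_nonneg
      (hm r (isRoot_of_mem_roots (Multiset.mem_toFinset.1 hr))).le (sq_nonneg _)
  positivity

lemma exists_eq_herglotzNumerator {g : ℝ[X]} (hf : f.Splits)
    (hf0 : 0 < f.leadingCoeff) (hg0 : 0 < g.leadingCoeff) (hdeg : g.natDegree = f.natDegree + 1)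
    (hneg : ∀ r, f.IsRoot r → g.eval r * (derivative f).eval r < 0) :
    ∃ a b m, 0 < a ∧ (∀ r, f.IsRoot r → 0 < m r) ∧ g = herglotzNumerator f a b m := by
  have hf_ne : f ≠ 0 := leadingCoeff_ne_zero.1 hf0.ne'
  obtain ⟨h, hgh⟩ := exists_eq_mul_add_sum_divByMonic hf hf_ne
    (fun r hr ↦ right_ne_zero_of_mul (hneg r hr).ne) g
  set S := ∑ r ∈ f.roots.toFinset, C (g.eval r / (derivative f).eval r) * (f /ₘ (X - C r))
  have hSg : S.degree < g.degree :=
    (degree_sum_divByMonic_lt hf_ne _ _).trans (degree_lt_degree (by lia))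
  have hhf : h * f = g - S := by rw [hgh, add_sub_cancel_right]
  have hlead : h.leadingCoeff * f.leadingCoeff = g.leadingCoeff := by
    rw [← leadingCoeff_mul, hhf, leadingCoeff_sub_of_degree_lt hSg]
  have hh0 : 0 < h.leadingCoeff := pos_of_mul_pos_left (hlead ▸ hg0) hf0.le
  have hhdeg : h.natDegree = 1 := by
    have : (h * f).natDegree = g.natDegree := by
      rw [hhf, natDegree_eq_of_degree_eq (degree_sub_eq_left_of_degree_lt hSg)]
    rw [natDegree_mul (leadingCoeff_ne_zero.1 hh0.ne') hf_ne] at this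
    lia
  refine ⟨h.coeff 1, h.coeff 0, fun r ↦ -(g.eval r / (derivative f).eval r), ?_, ?_, ?_⟩
  · rwa [← hhdeg]
  · intro r hr
    rw [neg_pos, div_neg_iff, ← mul_neg_iff]
    exact hneg r hr
  · rw [herglotzNumerator, ← eq_X_add_C_of_natDegree_le_one hhdeg.le]
    simpa only [C_neg, neg_mul, Finset.sum_neg_distrib, sub_neg_eq_add] using hgh

end Herglotz

section Interlacing

variable {f g h : ℝ[X]}

/-- `g` has only real roots, all of them simple, and `f` has the sign of `g'` at each of them. When
`f.natDegree + 1 = g.natDegree` and both leading coefficients are positive, this says that the roots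
of `f` strictly separate those of `g`. -/
structure StrictlyInterlaces (f g : ℝ[X]) : Prop where
  splits : g.Splits
  eval_mul_eval_derivative_pos : ∀ x, g.IsRoot x → 0 < f.eval x * (derivative g).eval x

lemma StrictlyInterlaces.succ (hfg : StrictlyInterlaces f g) (hg0 : 0 < g.leadingCoeff)
    (hh0 : 0 < h.leadingCoeff) (hdeg : h.natDegree = g.natDegree + 1)
    (hneg : ∀ x, g.IsRoot x → f.eval x * h.eval x < 0) : StrictlyInterlaces g h := by
  have hsign (x : ℝ) (hx : g.IsRoot x) : h.eval x * (derivative g).eval x < 0 := by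
    have hprod := mul_neg_of_neg_of_pos (hneg x hx) (hfg.eval_mul_eval_derivative_pos x hx)
    refine neg_of_mul_neg_right (a := f.eval x ^ 2) ?_ (sq_nonneg _)
    linarith
  obtain ⟨a, b, m, ha, hm, rfl⟩ := exists_eq_herglotzNumerator hfg.splits hg0 hh0 hdeg hsign
  refine ⟨splits_herglotzNumerator hfg.splits (leadingCoeff_ne_zero.1 hg0.ne') ha hm b, ?_⟩
  refine fun x hx ↦ eval_mul_eval_derivative_herglotzNumerator_pos ha hm b (fun hgx ↦ ?_) hx
  simpa [hx.eq_zero] using hneg x hgx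

lemma strictlyInterlaces_of_sturm_chain {F : ℕ → ℝ[X]} {k : ℕ}
    (hdeg : ∀ j ≤ k, (F j).natDegree = j) (hlead : ∀ j ≤ k, 0 < (F j).leadingCoeff)
    (hneg : ∀ j, j + 2 ≤ k → ∀ x, (F (j + 1)).IsRoot x → (F j).eval x * (F (j + 2)).eval x < 0)
    {j : ℕ} (hj : j + 1 ≤ k) : StrictlyInterlaces (F j) (F (j + 1)) := by
  induction j with
  | zero =>
    refine ⟨.of_natDegree_le_one (hdeg 1 hj).le, fun x _ ↦ ?_⟩
    have hF0 := hlead 0 (by lia)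
    have hF1 := hlead 1 hj
    rw [leadingCoeff, hdeg 0 (by lia)] at hF0
    rw [leadingCoeff, hdeg 1 hj] at hF1
    rw [eq_C_of_natDegree_eq_zero (hdeg 0 (by lia)),
      eq_X_add_C_of_natDegree_le_one (hdeg 1 hj).le]
    simpa using mul_pos hF0 hF1
  | succ j ih =>
    refine (ih (by lia)).succ (hlead _ (by lia)) (hlead _ hj) ?_ (hneg j hj)
    rw [hdeg _ hj, hdeg _ (by lia)]

end Interlacing

section Pencil

variable {Φ : ℝ[X][X]} {k : ℕ}

/-- A pencil of real-rooted polynomials `Φ(s, ·)`, normalised by `Φ(s, 0) = 1`, in which the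
coefficient of the `j`-th power is a polynomial of degree at most `j` in the parameter `s`. The
parameter is the inner variable of `ℝ[X][X]`. -/
structure IsRealRootedPencil (Φ : ℝ[X][X]) : Prop where
  coeff_zero : Φ.coeff 0 = 1
  natDegree_coeff_le : ∀ j, (Φ.coeff j).natDegree ≤ j
  splits_map_eval : ∀ s : ℝ, (Φ.map (evalRingHom s)).Splits

lemma map_eval_mul_map_C (Φ : ℝ[X][X]) (ψ : ℝ[X]) (s : ℝ) :
    (Φ * ψ.map C).map (evalRingHom s) = Φ.map (evalRingHom s) * ψ := by
  have : (evalRingHom s).comp C = RingHom.id ℝ := by ext; simp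
  rw [Polynomial.map_mul, Polynomial.map_map, this, Polynomial.map_id]

namespace IsRealRootedPencil

lemma natDegree_coeff_eq (hΦ : IsRealRootedPencil Φ) {j : ℕ} (hj : (Φ.coeff j).coeff j ≠ 0) :
    (Φ.coeff j).natDegree = j :=
  (hΦ.natDegree_coeff_le j).antisymm (le_natDegree_of_ne_zero hj)

lemma eval_coeff_mul_eval_coeff_neg (hΦ : IsRealRootedPencil Φ) {j : ℕ} {s : ℝ}
    (hj : j < (Φ.map (evalRingHom s)).natDegree) (hs : (Φ.coeff (j + 1)).IsRoot s) :
    (Φ.coeff j).eval s * (Φ.coeff (j + 2)).eval s < 0 := by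
  have hcoeff (i : ℕ) : (Φ.map (evalRingHom s)).coeff i = (Φ.coeff i).eval s := by
    rw [coeff_map, coe_evalRingHom]
  have hsplits := hΦ.splits_map_eval s
  have hne := coeff_ne_zero_or_coeff_succ_ne_zero hsplits (by simp [hcoeff, hΦ.coeff_zero]) hj
  rw [hcoeff, hcoeff] at hne
  have hneg := coeff_mul_coeff_add_two_neg hsplits hj
    (by rw [hcoeff]; exact hne.resolve_right (not_not.2 hs)) (by rw [hcoeff]; exact hs)
  rwa [hcoeff, hcoeff] at hneg

lemma splits_coeff (hΦ : IsRealRootedPencil Φ)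
    (hdeg : ∀ s : ℝ, k ≤ (Φ.map (evalRingHom s)).natDegree)
    (htop : ∀ j ≤ k, 0 < (Φ.coeff j).coeff j) : (Φ.coeff k).Splits := by
  have hnatDegree (j : ℕ) (hj : j ≤ k) : (Φ.coeff j).natDegree = j :=
    hΦ.natDegree_coeff_eq (htop j hj).ne'
  cases k with
  | zero => exact .of_natDegree_le_one (by rw [hnatDegree 0 le_rfl]; exact zero_le_one)
  | succ i =>
    refine (strictlyInterlaces_of_sturm_chain hnatDegree (fun j hj ↦ ?_) (fun j hj s hs ↦ ?_)
      le_rfl).splits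
    · rw [leadingCoeff, hnatDegree j hj]
      exact htop j hj
    · exact hΦ.eval_coeff_mul_eval_coeff_neg (by linarith [hdeg s]) hs

lemma coeff_coeff_mul_map_C (hΦ : IsRealRootedPencil Φ) {ψ : ℝ[X]} (hψ : ψ.coeff 0 = 1) (j : ℕ) :
    ((Φ * ψ.map C).coeff j).coeff j = (Φ.coeff j).coeff j := by
  rw [coeff_mul, finsetSum_coeff, Finset.sum_eq_single_of_mem (j, 0) (by simp)]
  · simp [hψ]
  · rintro ⟨a, b⟩ hab hne
    rw [Finset.HasAntidiagonal.mem_antidiagonal] at hab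
    rw [coeff_map, coeff_mul_C, coeff_eq_zero_of_natDegree_lt, zero_mul]
    refine (hΦ.natDegree_coeff_le a).trans_lt ?_
    grind

lemma mul_map_C (hΦ : IsRealRootedPencil Φ) {ψ : ℝ[X]} (hψ : ψ.Splits) (hψ0 : ψ.coeff 0 = 1) :
    IsRealRootedPencil (Φ * ψ.map C) where
  coeff_zero := by simp [mul_coeff_zero, hΦ.coeff_zero, hψ0]
  natDegree_coeff_le j := by
    rw [coeff_mul]
    refine natDegree_sum_le_of_forall_le _ _ fun ⟨a, b⟩ hab ↦ ?_
    rw [coeff_map]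
    refine (natDegree_mul_C_le _ _).trans ((hΦ.natDegree_coeff_le a).trans ?_)
    exact (Finset.HasAntidiagonal.mem_antidiagonal.1 hab).le.trans' (Nat.le_add_right a b)
  splits_map_eval s := by
    rw [map_eval_mul_map_C]
    exact (hΦ.splits_map_eval s).mul hψ

lemma le_natDegree_map_eval_mul_map_C (hΦ : IsRealRootedPencil Φ) {ψ : ℝ[X]} (hψ : ψ ≠ 0) (s : ℝ) :
    ψ.natDegree ≤ ((Φ * ψ.map C).map (evalRingHom s)).natDegree := by
  have hne : Φ.map (evalRingHom s) ≠ 0 := fun h ↦ by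
    simpa [hΦ.coeff_zero] using congrArg (coeff · 0) h
  rw [map_eval_mul_map_C, natDegree_mul hne hψ]
  exact Nat.le_add_left _ _

end IsRealRootedPencil

/-- Multiplying a pencil by this polynomial adjoins `k` roots at `-1/ε`. -/
noncomputable def perturbation (k : ℕ) (ε : ℝ) : ℝ[X] :=
  (1 + C ε * X) ^ k

lemma coeff_perturbation (k : ℕ) (ε : ℝ) (b : ℕ) :
    (perturbation k ε).coeff b = k.choose b * ε ^ b := by
  have : perturbation k ε = ((1 + X) ^ k).comp (C ε * X) := by simp [perturbation]
  rw [this, comp_C_mul_X_coeff, coeff_one_add_X_pow]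

lemma splits_perturbation (k : ℕ) (ε : ℝ) : (perturbation k ε).Splits :=
  .pow (.of_natDegree_le_one (by compute_degree)) k

lemma natDegree_perturbation (k : ℕ) {ε : ℝ} (hε : ε ≠ 0) : (perturbation k ε).natDegree = k := by
  have : (1 + C ε * X).natDegree = 1 := by compute_degree!
  rw [perturbation, natDegree_pow, this, mul_one]

lemma continuous_coeff_coeff_mul_map_perturbation (Φ : ℝ[X][X]) (k j i : ℕ) :
    Continuous fun ε ↦ ((Φ * (perturbation k ε).map C).coeff j).coeff i := by
  simp only [coeff_mul _ _ j, finsetSum_coeff, coeff_map, coeff_mul_C, coeff_perturbation]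
  fun_prop

namespace IsRealRootedPencil

lemma laguerreGap_reflect_coeff_nonneg_of_le_natDegree (hΦ : IsRealRootedPencil Φ)
    (hdeg : ∀ s : ℝ, k ≤ (Φ.map (evalRingHom s)).natDegree)
    (htop : ∀ j ≤ k, 0 < (Φ.coeff j).coeff j) : 0 ≤ laguerreGap k ((Φ.coeff k).reflect k) 0 := by
  have hreverse : (Φ.coeff k).reflect k = (Φ.coeff k).reverse := by
    rw [reverse, hΦ.natDegree_coeff_eq (htop k le_rfl).ne']
  have hne : Φ.coeff k ≠ 0 := fun h ↦ by simpa [h] using htop k le_rfl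
  rw [hreverse]
  refine laguerreGap_nonneg (splits_reverse (hΦ.splits_coeff hdeg htop)) ?_
    ((reverse_natDegree_le _).trans (hΦ.natDegree_coeff_le k))
  rwa [← coeff_zero_eq_eval_zero, coeff_zero_reverse, leadingCoeff_ne_zero]

lemma laguerreGap_reflect_coeff_nonneg (hΦ : IsRealRootedPencil Φ)
    (htop : ∀ j ≤ k, 0 < (Φ.coeff j).coeff j) : 0 ≤ laguerreGap k ((Φ.coeff k).reflect k) 0 := by
  let Φ' (ε : ℝ) : ℝ[X][X] := Φ * (perturbation k ε).map C
  have hcoeff_zero (ε : ℝ) : (perturbation k ε).coeff 0 = 1 := by simp [coeff_perturbation]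
  have hcont : Continuous fun ε ↦ laguerreGap k (((Φ' ε).coeff k).reflect k) 0 := by
    have hcoeff (i : ℕ) : Continuous fun ε ↦ (((Φ' ε).coeff k).reflect k).coeff i := by
      simp only [coeff_reflect]
      exact continuous_coeff_coeff_mul_map_perturbation Φ k k _
    simp only [laguerreGap_zero_eq]
    fun_prop
  have hperturbed (ε : ℝ) (hε : ε ≠ 0) : 0 ≤ laguerreGap k (((Φ' ε).coeff k).reflect k) 0 := by
    have hΦ' : IsRealRootedPencil (Φ' ε) :=
      hΦ.mul_map_C (splits_perturbation k ε) (hcoeff_zero ε)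
    refine hΦ'.laguerreGap_reflect_coeff_nonneg_of_le_natDegree (fun s ↦ ?_) fun j hj ↦ ?_
    · refine (natDegree_perturbation k hε).ge.trans (hΦ.le_natDegree_map_eval_mul_map_C ?_ s)
      exact fun h ↦ by simpa [h] using hcoeff_zero ε
    · rw [hΦ.coeff_coeff_mul_map_C (hcoeff_zero ε)]
      exact htop j hj
  have hzero : Φ' 0 = Φ := by simp [Φ', perturbation]
  have : (0 : ℝ) ∈ closure {0}ᶜ := dense_compl_singleton 0 0
  have h := (isClosed_le continuous_const hcont).closure_subset_iff.2 hperturbed this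
  rwa [Set.mem_ofPred_eq, hzero] at h

end IsRealRootedPencil

end Pencil

section Matrix

variable {m R S K : Type*} [Fintype m] [DecidableEq m] [CommRing R] [CommRing S] [Field K]

/-- The polynomial `det (1 + X M) = ∑ k, σ_k(M) X ^ k` generating the elementary symmetric functions
of the eigenvalues of `M`. -/
noncomputable def sigmaGenerating (M : Matrix m m R) : R[X] :=
  det (1 + (X : R[X]) • M.map C)

/-- The polynomials generating the `σ_k(s A + B)`, as a pencil with parameter `s` in the inner
variable of `R[X][X]`. -/
noncomputable def sigmaPencil (A B : Matrix m m R) : R[X][X] :=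
  sigmaGenerating ((X : R[X]) • A.map C + B.map C)

lemma sigmaGenerating_mul_comm (M N : Matrix m m R) :
    sigmaGenerating (M * N) = sigmaGenerating (N * M) := by
  simp only [sigmaGenerating, Matrix.map_mul]
  rw [← Matrix.smul_mul, det_one_add_mul_comm, Matrix.mul_smul]

lemma map_sigmaGenerating (φ : R →+* S) (M : Matrix m m R) :
    (sigmaGenerating M).map φ = sigmaGenerating (M.map φ) := by
  rw [sigmaGenerating, ← coe_mapRingHom, RingHom.map_det, sigmaGenerating]
  congr 1
  ext i j
  simp [Matrix.one_apply, apply_ite]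

lemma coeff_sigmaGenerating_smul (c : R) (M : Matrix m m R) (k : ℕ) :
    (sigmaGenerating (c • M)).coeff k = c ^ k * (sigmaGenerating M).coeff k := by
  simp only [sigmaGenerating, coeff_det_one_add_X_smul_eq_sum_minors, Finset.mul_sum]
  refine Finset.sum_congr rfl fun s hs ↦ ?_
  have hcard : Fintype.card s = k := by rw [Fintype.card_coe, (Finset.mem_powersetCard.1 hs).2]
  rw [← hcard, ← det_smul]
  rfl

lemma coeff_sigmaGenerating_diagonal (d : m → R) (k : ℕ) :
    (sigmaGenerating (diagonal d)).coeff k = (Finset.univ.val.map d).esymm k := by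
  rw [sigmaGenerating, coeff_det_one_add_X_smul_eq_sum_minors, Finset.esymm_map_val]
  refine Finset.sum_congr rfl fun s _ ↦ ?_
  rw [submatrix_diagonal _ _ Subtype.val_injective, det_diagonal]
  exact Finset.prod_coe_sort s d

lemma map_eval_sigmaPencil (A B : Matrix m m R) (s : R) :
    (sigmaPencil A B).map (evalRingHom s) = sigmaGenerating (s • A + B) := by
  rw [sigmaPencil, map_sigmaGenerating]
  congr 1
  ext i j
  simp [mul_comm s]

lemma natDegree_coeff_sigmaPencil_le (A B : Matrix m m R) (k : ℕ) :
    ((sigmaPencil A B).coeff k).natDegree ≤ k := by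
  rw [sigmaPencil, sigmaGenerating, coeff_det_one_add_X_smul_eq_sum_minors]
  refine natDegree_sum_le_of_forall_le _ _ fun s hs ↦ ?_
  refine (natDegree_det_X_add_C_le (A.submatrix _ _) (B.submatrix _ _)).trans_eq ?_
  rw [Fintype.card_coe, (Finset.mem_powersetCard.1 hs).2]

lemma coeff_coeff_sigmaPencil (A B : Matrix m m R) (k : ℕ) :
    ((sigmaPencil A B).coeff k).coeff k = (sigmaGenerating A).coeff k := by
  simp only [sigmaPencil, sigmaGenerating, coeff_det_one_add_X_smul_eq_sum_minors,
    finsetSum_coeff]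
  refine Finset.sum_congr rfl fun s hs ↦ ?_
  have hcard : Fintype.card s = k := by rw [Fintype.card_coe, (Finset.mem_powersetCard.1 hs).2]
  rw [← coeff_det_X_add_C_card _ (B.submatrix _ _), hcard]
  rfl

lemma eval_reflect_coeff_sigmaPencil (A B : Matrix m m K) (k : ℕ) (t : K) :
    (((sigmaPencil A B).coeff k).reflect k).eval t = (sigmaGenerating (A + t • B)).coeff k := by
  obtain rfl | ht := eq_or_ne t 0
  · rw [← coeff_zero_eq_eval_zero, coeff_reflect, revAt_zero, coeff_coeff_sigmaPencil, zero_smul,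
      add_zero]
  · have hmap := congrArg (coeff · k) (map_eval_sigmaPencil A B t⁻¹)
    simp only [coeff_map, coe_evalRingHom] at hmap
    have hsmul : A + t • B = t • (t⁻¹ • A + B) := by rw [smul_add, smul_inv_smul₀ ht]
    have : Invertible t⁻¹ := invertibleOfNonzero (inv_ne_zero ht)
    have hreflect := eval₂_reflect_mul_pow (RingHom.id K) t⁻¹ k _
      (natDegree_coeff_sigmaPencil_le A B k)
    rw [invOf_eq_inv, inv_inv] at hreflect
    rw [hsmul, coeff_sigmaGenerating_smul, ← hmap, eval, eval, ← hreflect, inv_pow,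
      mul_comm, inv_mul_cancel_right₀ (pow_ne_zero k ht)]

lemma splits_sigmaGenerating {M : Matrix m m ℝ} (hM : M.IsHermitian) :
    (sigmaGenerating M).Splits := by
  have hrev : sigmaGenerating M = (-M).charpoly.reverse := by
    rw [reverse_charpoly, charpolyRev, sigmaGenerating]
    congr 1
    ext i j
    simp
  rw [hrev]
  exact splits_reverse hM.neg.splits_charpoly

lemma isRealRootedPencil_sigmaPencil {A B : Matrix m m ℝ} (hA : A.IsHermitian)
    (hB : B.IsHermitian) : IsRealRootedPencil (sigmaPencil A B) where
  coeff_zero := by simp [sigmaPencil, sigmaGenerating, coeff_det_one_add_X_smul_eq_sum_minors]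
  natDegree_coeff_le := natDegree_coeff_sigmaPencil_le A B
  splits_map_eval s := by
    rw [map_eval_sigmaPencil]
    exact splits_sigmaGenerating ((hA.smul (.all s)).add hB)

end Matrix

lemma sigmaEig_eq_coeff_sigmaGenerating {n : ℕ} {M : Matrix (Fin n) (Fin n) ℝ}
    (hM : M.IsHermitian) (k : ℕ) : sigmaEig hM k = (sigmaGenerating M).coeff k := by
  have hdiag : sigmaGenerating M = sigmaGenerating (diagonal hM.eigenvalues) := by
    conv_lhs => rw [hM.spectral_theorem, Unitary.conjStarAlgAut_apply, sigmaGenerating_mul_comm,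
      ← mul_assoc]
    simp
  rw [hdiag, coeff_sigmaGenerating_diagonal, sigmaEig]

/-- Concavity of `σ_k^{1/k}` on the Gårding cone `Γ_k⁺`, in the polynomial form:
if `σ_j(A) > 0` for `1 ≤ j ≤ k` and `p(t) = σ_k(A + t B)`, then
`p(0) p''(0) ≤ ((k-1)/k) p'(0)²`. -/
theorem sigma_k_second_derivative_inequality
    {n k : ℕ} (hn : 1 ≤ n) (hk1 : 1 ≤ k) (hkn : k ≤ n)
    (A B : Matrix (Fin n) (Fin n) ℝ)
    (hA : A.IsHermitian) (hB : B.IsHermitian)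
    (hGamma : ∀ j : ℕ, 1 ≤ j → j ≤ k → 0 < sigmaEig hA j)
    (p : ℝ → ℝ)
    (hp : ∀ t : ℝ, p t = sigmaEig (hA.add (isHermitian_smul_real hB t)) k) :
    p 0 * deriv (deriv p) 0 ≤ ((k : ℝ) - 1) / k * (deriv p 0) ^ 2 := by
  have hpencil := isRealRootedPencil_sigmaPencil hA hB
  have htop (j : ℕ) (hj : j ≤ k) : 0 < ((sigmaPencil A B).coeff j).coeff j := by
    obtain rfl | hj0 := j.eq_zero_or_pos
    · simp [hpencil.coeff_zero]
    · rw [coeff_coeff_sigmaPencil, ← sigmaEig_eq_coeff_sigmaGenerating hA]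
      exact hGamma j hj0 hj
  set P := ((sigmaPencil A B).coeff k).reflect k
  have hpP : p = fun t ↦ P.eval t := by
    funext t
    rw [hp, sigmaEig_eq_coeff_sigmaGenerating, eval_reflect_coeff_sigmaPencil]
  have hderiv (Q : ℝ[X]) : deriv (fun t ↦ Q.eval t) = fun t ↦ (derivative Q).eval t :=
    funext fun _ ↦ Q.deriv
  have hgap : 0 ≤ laguerreGap k P 0 := hpencil.laguerreGap_reflect_coeff_nonneg htop
  rw [laguerreGap, sub_nonneg] at hgap
  have hk0 : (0 : ℝ) < k := by exact_mod_cast hk1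
  rwa [hpP, hderiv, hderiv, div_mul_eq_mul_div, le_div_iff₀' hk0]
end

section
/- Let n ≥ 1 and let A be an n×n real symmetric matrix with tr A > 0 and σ₂(A) > 0, where σ₂(M) := ((tr M)² − tr(M²))/2. Then for every n×n real symmetric matrix B one has 4·σ₂(A)·σ₂(B) ≤ (tr A · tr B − tr(A·B))². -/
open Matrix

/-- The second elementary symmetric polynomial of the eigenvalues of a matrix,
expressed as `((tr M)² − tr(M²))/2`. -/
noncomputable def sigma2 {n : ℕ} (M : Matrix (Fin n) (Fin n) ℝ) : ℝ :=
  ((M.trace) ^ 2 - (M * M).trace) / 2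

/-!
The polarization `tr A tr B - tr (AB)` of `2σ₂` is negative semidefinite on trace-free symmetric
matrices, where it equals `-tr (AB)`. The combination `(tr A) B - (tr B) A` is trace-free, and
passing from `(A, B)` to `(A, (tr A) B - (tr B) A)` multiplies the Gram determinant by `(tr A)²`.
The new Gram determinant is nonpositive when `σ₂(A) ≥ 0`, hence so is the original one if
`tr A ≠ 0`; if `tr A = 0`, then `σ₂(A) = 0`.
-/

section BilinForm

variable {R M : Type*} [CommRing R] [AddCommGroup M] [Module R M]

theorem gram_det_smul_sub_smul (Φ : LinearMap.BilinForm R M) (a b : R) (x y : M) :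
    Φ x x * Φ (a • y - b • x) (a • y - b • x) - Φ x (a • y - b • x) * Φ (a • y - b • x) x =
      a ^ 2 * (Φ x x * Φ y y - Φ x y * Φ y x) := by
  simp only [map_sub, map_smul, LinearMap.sub_apply, LinearMap.smul_apply, smul_eq_mul]
  ring

theorem apply_self_mul_apply_self_le_sq_of_smul_sub_smul_nonpos
    [LinearOrder R] [IsStrictOrderedRing R] {Φ : LinearMap.BilinForm R M} (hΦ : Φ.IsSymm)
    {a b : R} {x y : M} (ha : a ≠ 0) (hx : 0 ≤ Φ x x)
    (hz : Φ (a • y - b • x) (a • y - b • x) ≤ 0) :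
    Φ x x * Φ y y ≤ Φ x y ^ 2 := by
  have gram := gram_det_smul_sub_smul Φ a b x y
  rw [hΦ.eq y x, hΦ.eq (a • y - b • x) x, ← sq, ← sq] at gram
  have scaled_gram_nonpos : a ^ 2 * (Φ x x * Φ y y - Φ x y ^ 2) ≤ 0 :=
    gram ▸ sub_nonpos.2 ((mul_nonpos_of_nonneg_of_nonpos hx hz).trans (sq_nonneg _))
  exact sub_nonpos.1 (nonpos_of_mul_nonpos_right scaled_gram_nonpos (sq_pos_of_ne_zero ha))

end BilinForm

section Matrix

variable {ι R : Type*} [Fintype ι] [CommRing R]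

/-- The pairing `(A, B) ↦ tr A tr B - tr (AB)` of `B` with the first Newton tensor `(tr A) I - A`
of `A`. It is the polarization of `2σ₂`, normalized so that its diagonal is `2σ₂`. -/
def newtonForm (ι R : Type*) [Fintype ι] [CommRing R] :
    LinearMap.BilinForm R (Matrix ι ι R) :=
  LinearMap.BilinForm.linMulLin (traceLinearMap ι R R) (traceLinearMap ι R R) -
    (LinearMap.mul R (Matrix ι ι R)).compr₂ (traceLinearMap ι R R)

theorem newtonForm_apply (A B : Matrix ι ι R) :
    newtonForm ι R A B = A.trace * B.trace - (A * B).trace :=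
  rfl

theorem isSymm_newtonForm : (newtonForm ι R).IsSymm :=
  ⟨fun A B => by simp only [newtonForm_apply, mul_comm A.trace, trace_mul_comm A]⟩

theorem two_mul_sigma2 {n : ℕ} (M : Matrix (Fin n) (Fin n) ℝ) :
    2 * sigma2 M = newtonForm (Fin n) ℝ M M := by
  rw [sigma2, newtonForm_apply]
  ring

variable [LinearOrder R] [IsStrictOrderedRing R] {A B : Matrix ι ι R}

theorem trace_mul_self_nonneg_of_isSymm (hA : A.IsSymm) : 0 ≤ (A * A).trace := by
  nth_rewrite 1 [← hA.eq]
  rw [← vec_dotProduct_vec]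
  exact Finset.sum_nonneg fun _ _ => mul_self_nonneg _

theorem newtonForm_self_nonpos_of_trace_eq_zero (hA : A.IsSymm) (htr : A.trace = 0) :
    newtonForm ι R A A ≤ 0 := by
  rw [newtonForm_apply, htr, zero_mul, zero_sub, neg_nonpos]
  exact trace_mul_self_nonneg_of_isSymm hA

theorem sigma2_reverse_cauchy_schwarz_general (hA : A.IsSymm) (hB : B.IsSymm)
    (hA_nonneg : 0 ≤ newtonForm ι R A A) :
    newtonForm ι R A A * newtonForm ι R B B ≤ newtonForm ι R A B ^ 2 := by
  by_cases htr : A.trace = 0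
  · have hA_null : newtonForm ι R A A = 0 :=
      (newtonForm_self_nonpos_of_trace_eq_zero hA htr).antisymm hA_nonneg
    rw [hA_null, zero_mul]
    exact sq_nonneg _
  · have htr_comb : (A.trace • B - B.trace • A).trace = 0 := by
      rw [trace_sub, trace_smul, trace_smul, smul_eq_mul, smul_eq_mul, mul_comm, sub_self]
    exact apply_self_mul_apply_self_le_sq_of_smul_sub_smul_nonpos isSymm_newtonForm htr hA_nonneg
      (newtonForm_self_nonpos_of_trace_eq_zero ((hB.smul _).sub (hA.smul _)) htr_comb)

end Matrix

/-- Reverse Cauchy–Schwarz inequality for the hyperbolic quadratic form `σ₂`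
(Gårding's inequality in the case `k = 2`): if `A` is symmetric with `tr A > 0`
and `σ₂(A) > 0`, then for every symmetric `B`,
`4 σ₂(A) σ₂(B) ≤ (tr A · tr B − tr(AB))²`. -/
theorem sigma2_reverse_cauchy_schwarz
    {n : ℕ} (hn : 1 ≤ n) (A : Matrix (Fin n) (Fin n) ℝ) (hA : A.IsHermitian)
    (htr : 0 < A.trace) (hs2 : 0 < sigma2 A)
    (B : Matrix (Fin n) (Fin n) ℝ) (hB : B.IsHermitian) :
    4 * sigma2 A * sigma2 B ≤ (A.trace * B.trace - (A * B).trace) ^ 2 := by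
  have h := sigma2_reverse_cauchy_schwarz_general (isHermitian_iff_isSymm.1 hA)
    (isHermitian_iff_isSymm.1 hB) (by linarith [two_mul_sigma2 A])
  rw [← two_mul_sigma2, ← two_mul_sigma2, newtonForm_apply] at h
  linarith
end

section
/- Let A be a 4×4 real symmetric matrix with tr A > 0 and σ₂(A) > 0, where σ₂(A) := ((tr A)² − tr(A²))/2. Then the matrix 2A + (tr A)·I is positive definite. -/
open Matrix

/-!
Let `T = tr A > 0`, let `S = tr (A²) < T²`, and let `μ` be an eigenvalue of `A`. Since `μ² ≤ S`,
we have `μ < T`. Cauchy–Schwarz for the other `n - 1` eigenvalues gives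
`(T - μ)² ≤ (n - 1) (S - μ²) < (n - 1) (T - μ) (T + μ)`. Cancelling `T - μ` leaves
`0 < n μ + (n - 2) T`, which for `n = 4` is twice the inequality `0 < 2 μ + T`.
-/

section FiniteSums

variable {ι R : Type*} [CommRing R] [LinearOrder R] [IsStrictOrderedRing R]
  {s : Finset ι} {i : ι} {f : ι → R}

lemma sq_sum_sub_le_card_sub_one_mul_sum_sq_sub (hi : i ∈ s) :
    (∑ j ∈ s, f j - f i) ^ 2 ≤ (s.card - 1) * (∑ j ∈ s, f j ^ 2 - f i ^ 2) := by
  classical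
  simpa only [Finset.sum_erase_eq_sub hi, Finset.cast_card_erase_of_mem hi] using
    sq_sum_le_card_mul_sum_sq (s := s.erase i) (f := f)

lemma lt_sum_of_sum_sq_lt_sq_sum (hi : i ∈ s) (hsum : 0 < ∑ j ∈ s, f j)
    (hsq : ∑ j ∈ s, f j ^ 2 < (∑ j ∈ s, f j) ^ 2) : f i < ∑ j ∈ s, f j :=
  lt_of_pow_lt_pow_left₀ 2 hsum.le <|
    (Finset.single_le_sum (fun j _ ↦ sq_nonneg (f j)) hi).trans_lt hsq

lemma card_mul_add_card_sub_two_mul_sum_pos (hi : i ∈ s) (hsum : 0 < ∑ j ∈ s, f j)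
    (hsq : ∑ j ∈ s, f j ^ 2 < (∑ j ∈ s, f j) ^ 2) :
    0 < s.card * f i + (s.card - 2) * ∑ j ∈ s, f j := by
  have cauchy := sq_sum_sub_le_card_sub_one_mul_sum_sq_sub (f := f) hi
  have gap_pos : 0 < ∑ j ∈ s, f j - f i := sub_pos.2 (lt_sum_of_sum_sq_lt_sq_sum hi hsum hsq)
  have sq_le : f i ^ 2 ≤ ∑ j ∈ s, f j ^ 2 :=
    Finset.single_le_sum (fun j _ ↦ sq_nonneg (f j)) hi
  have card_sub_one_pos : (0 : R) < s.card - 1 :=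
    pos_of_mul_pos_left ((pow_pos gap_pos 2).trans_le cauchy) (sub_nonneg.2 sq_le)
  have gap_mul_lt : (∑ j ∈ s, f j - f i) * (∑ j ∈ s, f j - f i) <
      (∑ j ∈ s, f j - f i) * ((s.card - 1) * (∑ j ∈ s, f j + f i)) :=
    calc
      _ = (∑ j ∈ s, f j - f i) ^ 2 := (sq _).symm
      _ ≤ (s.card - 1) * (∑ j ∈ s, f j ^ 2 - f i ^ 2) := cauchy
      _ < (s.card - 1) * ((∑ j ∈ s, f j) ^ 2 - f i ^ 2) := by gcongr
      _ = _ := by ring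
  linarith [lt_of_mul_lt_mul_left gap_mul_lt gap_pos.le]

end FiniteSums

section Hermitian

variable {ι 𝕜 : Type*} [Fintype ι] [DecidableEq ι] [RCLike 𝕜] {A : Matrix ι ι 𝕜}

lemma trace_pow_eq_sum_eigenvalues_pow (hA : A.IsHermitian) (k : ℕ) :
    (A ^ k).trace = ∑ i, (hA.eigenvalues i : 𝕜) ^ k := by
  conv_lhs => rw [hA.spectral_theorem, ← map_pow]
  rw [Unitary.conjStarAlgAut_apply, trace_mul_cycle, Unitary.coe_star_mul_self, one_mul,
    diagonal_pow, trace_diagonal]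
  rfl

open scoped ComplexOrder in
lemma posDef_smul_add_smul_one_iff (hA : A.IsHermitian) (a b : ℝ) :
    (a • A + b • (1 : Matrix ι ι 𝕜)).PosDef ↔ ∀ i, 0 < a * hA.eigenvalues i + b := by
  have diagonalization : a • A + b • (1 : Matrix ι ι 𝕜) =
      Unitary.conjStarAlgAut 𝕜 _ hA.eigenvectorUnitary
        (diagonal fun i ↦ ((a * hA.eigenvalues i + b : ℝ) : 𝕜)) := by
    conv_lhs => rw [hA.spectral_theorem]
    rw [← map_one (Unitary.conjStarAlgAut 𝕜 _ hA.eigenvectorUnitary)]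
    simp only [RCLike.real_smul_eq_coe_smul (K := 𝕜)]
    rw [← map_smul, ← map_smul, ← map_add, smul_one_eq_diagonal, ← diagonal_smul, diagonal_add]
    simp [Function.comp_def]
  rw [diagonalization, Unitary.conjStarAlgAut_apply,
    Unitary.isUnit_coe.posDef_star_right_conjugate_iff, posDef_diagonal_iff]
  simp only [RCLike.ofReal_pos]

end Hermitian

theorem ricci_posDef_of_gamma2_general {n : ℕ} (A : Matrix (Fin n) (Fin n) ℝ)
    (hA : A.IsHermitian) (htr : 0 < A.trace) (hs2 : 0 < sigma2 A) :
    ((n : ℝ) • A + ((n - 2) * A.trace) • (1 : Matrix (Fin n) (Fin n) ℝ)).PosDef := by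
  have trace_eq : A.trace = ∑ i, hA.eigenvalues i := hA.trace_eq_sum_eigenvalues
  have trace_sq_eq : (A * A).trace = ∑ i, hA.eigenvalues i ^ 2 := by
    simpa only [sq A, RCLike.ofReal_real_eq_id, id] using trace_pow_eq_sum_eigenvalues_pow hA 2
  have sum_sq_lt : ∑ i, hA.eigenvalues i ^ 2 < (∑ i, hA.eigenvalues i) ^ 2 := by
    rw [← trace_eq, ← trace_sq_eq]
    unfold sigma2 at hs2
    linarith
  rw [posDef_smul_add_smul_one_iff hA]
  intro i
  simpa only [trace_eq, Finset.card_fin] using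
    card_mul_add_card_sub_two_mul_sum_pos (Finset.mem_univ i) (trace_eq ▸ htr) sum_sq_lt

/-- If a `4×4` real symmetric matrix `A` satisfies `tr A > 0` and `σ₂(A) > 0`
(i.e. `A` lies in the cone `Γ₂⁺`), then `2A + (tr A)·I` is positive definite.
(If `A` is the Schouten tensor of a metric in dimension 4, `2A + (tr A)·I` is
the Ricci tensor.) -/
theorem ricci_posDef_of_gamma2
    (A : Matrix (Fin 4) (Fin 4) ℝ) (hA : A.IsHermitian)
    (htr : 0 < A.trace) (hs2 : 0 < sigma2 A) :
    ((2 : ℝ) • A + A.trace • (1 : Matrix (Fin 4) (Fin 4) ℝ)).PosDef := by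
  convert (ricci_posDef_of_gamma2_general A hA htr hs2).smul (one_half_pos (α := ℝ)) using 1
  module
end

section
/- Let (v_j) be a sequence of measurable functions from ℝ⁴ to ℝ such that for some constant C one has |v_j(z)| ≤ C for all j and all z, and such that for some constant L and every δ > 0, v_j converges to L uniformly on {z ∈ ℝ⁴ : ‖z‖ ≥ δ}. Let (t_j) be a sequence of positive reals with t_j → ∞, let M > 0, and let h ∈ {1,2,3,4}. Then t_j · ∫_{‖z‖ > M/t_j} (2 t_j z_h/(1 + t_j² ‖z‖²)) · e^{4 v_j(z)} · (2/(1+‖z‖²))⁴ dz → 0 as j → ∞. -/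
open MeasureTheory Filter

/-!
The factor `t * (2 t ℓ(z) / (1 + t² ‖z‖²))` is bounded by `2 ‖ℓ‖ / ‖z‖` for every `t` and converges
to `2 ℓ(z) / ‖z‖²` as `t → ∞`. In dimension at least two `1 / ‖z‖` is integrable at the origin, and
the stereographic density makes it integrable at infinity, so dominated convergence applies. The
limiting integrand is odd, and its integral vanishes.
-/

open Topology Module

section Odd

variable {G F : Type*} [AddGroup G] [MeasurableSpace G] [MeasurableNeg G]
  [NormedAddCommGroup F] [NormedSpace ℝ F]

theorem integral_eq_zero_of_odd {f : G → F} (hf : f.Odd) (μ : Measure G) [μ.IsNegInvariant] :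
    ∫ x, f x ∂μ = 0 := by
  have : IsAddTorsionFree F := .of_isTorsionFree ℝ F
  simp_rw [← self_eq_neg, ← integral_neg, ← hf.eq, integral_neg_eq_self]

end Odd

theorem pow_le_one_add_sq_pow {r : ℝ} (hr : 0 ≤ r) {m k : ℕ} (hmk : m ≤ 2 * k) :
    r ^ m ≤ (1 + r ^ 2) ^ k := by
  rcases le_total r 1 with hr1 | hr1
  · calc r ^ m ≤ 1 := pow_le_one₀ hr hr1
      _ ≤ (1 + r ^ 2) ^ k := one_le_pow₀ (by linarith [sq_nonneg r])
  · calc r ^ m ≤ r ^ (2 * k) := pow_le_pow_right₀ hr1 hmk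
      _ = (r ^ 2) ^ k := pow_mul r 2 k
      _ ≤ (1 + r ^ 2) ^ k := by gcongr; linarith

section Integrable

variable {E : Type*} [NormedAddCommGroup E] [NormedSpace ℝ E] [FiniteDimensional ℝ E]
  [MeasurableSpace E] [BorelSpace E]

theorem integrable_inv_norm_mul_inv_one_add_norm_sq_pow (hE : 2 ≤ finrank ℝ E) {k : ℕ}
    (hk : finrank ℝ E ≤ 2 * k) (μ : Measure E) [μ.IsAddHaarMeasure] :
    Integrable (fun z : E => ‖z‖⁻¹ * ((1 + ‖z‖ ^ 2) ^ k)⁻¹) μ := by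
  have : Nontrivial E := nontrivial_of_finrank_pos (R := ℝ) (by lia)
  obtain ⟨n, hn⟩ : ∃ n, finrank ℝ E = n + 2 := ⟨finrank ℝ E - 2, by lia⟩
  obtain ⟨m, rfl⟩ : ∃ m, k = m + 1 := ⟨k - 1, by lia⟩
  rw [integrable_fun_norm_addHaar μ (f := fun r : ℝ => r⁻¹ * ((1 + r ^ 2) ^ (m + 1))⁻¹), hn]
  refine integrable_inv_one_add_sq.integrableOn.mono' (by fun_prop) ?_
  filter_upwards [ae_restrict_mem measurableSet_Ioi] with r (hr : 0 < r)
  rw [Real.norm_of_nonneg (by positivity)]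
  calc r ^ (n + 1) • (r⁻¹ * ((1 + r ^ 2) ^ (m + 1))⁻¹)
      = r ^ n / (1 + r ^ 2) ^ m * (1 + r ^ 2)⁻¹ := by
        simp only [smul_eq_mul, pow_succ]
        field_simp
    _ ≤ 1 * (1 + r ^ 2)⁻¹ := by
        gcongr
        exact div_le_one_of_le₀ (pow_le_one_add_sq_pow hr.le (by lia)) (by positivity)
    _ = (1 + r ^ 2)⁻¹ := one_mul _

end Integrable

section DilatedCoord

variable {E : Type*} [NormedAddCommGroup E] [NormedSpace ℝ E]

/-- The linear functional `ℓ`, seen as an ambient coordinate function on the unit sphere, composed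
with the conformal dilation of factor `t` and read in the stereographic coordinate `z`. -/
noncomputable def dilatedCoord (ℓ : StrongDual ℝ E) (t : ℝ) (z : E) : ℝ :=
  2 * t * ℓ z / (1 + t ^ 2 * ‖z‖ ^ 2)

@[simp]
theorem dilatedCoord_zero (ℓ : StrongDual ℝ E) (t : ℝ) : dilatedCoord ℓ t 0 = 0 := by
  simp [dilatedCoord]

theorem continuous_dilatedCoord (ℓ : StrongDual ℝ E) (t : ℝ) : Continuous (dilatedCoord ℓ t) := by
  unfold dilatedCoord
  exact Continuous.div (by fun_prop) (by fun_prop) fun z => by positivity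

theorem abs_mul_dilatedCoord_le (ℓ : StrongDual ℝ E) (t : ℝ) (z : E) :
    |t * dilatedCoord ℓ t z| ≤ 2 * ‖ℓ‖ * ‖z‖⁻¹ := by
  rcases eq_or_ne z 0 with rfl | hz
  · simp
  have hden : 0 < 1 + t ^ 2 * ‖z‖ ^ 2 := by positivity
  calc |t * dilatedCoord ℓ t z| = 2 * t ^ 2 * |ℓ z| / (1 + t ^ 2 * ‖z‖ ^ 2) := by
        rw [dilatedCoord, abs_mul, abs_div, abs_mul, abs_mul, abs_two, abs_of_pos hden,
          ← sq_abs t]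
        ring
    _ ≤ 2 * t ^ 2 * (‖ℓ‖ * ‖z‖) / (1 + t ^ 2 * ‖z‖ ^ 2) := by
        gcongr
        exact ℓ.le_opNorm z
    _ = 2 * ‖ℓ‖ * ‖z‖⁻¹ * (t ^ 2 * ‖z‖ ^ 2 / (1 + t ^ 2 * ‖z‖ ^ 2)) := by field_simp
    _ ≤ 2 * ‖ℓ‖ * ‖z‖⁻¹ :=
        mul_le_of_le_one_right (by positivity) (div_le_one_of_le₀ (by linarith) hden.le)

variable {ι : Type*} {l : Filter ι} {t : ι → ℝ}

theorem tendsto_mul_dilatedCoord (ht : Tendsto t l atTop) (ℓ : StrongDual ℝ E) (z : E) :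
    Tendsto (fun j => t j * dilatedCoord ℓ (t j) z) l (𝓝 (2 * ℓ z / ‖z‖ ^ 2)) := by
  rcases eq_or_ne z 0 with rfl | hz
  · simp [tendsto_const_nhds]
  have h_den : Tendsto (fun j => (t j)⁻¹ ^ 2 + ‖z‖ ^ 2) l (𝓝 (‖z‖ ^ 2)) := by
    simpa using (ht.inv_tendsto_atTop.pow 2).add_const (‖z‖ ^ 2)
  refine ((tendsto_const_nhds (x := 2 * ℓ z)).div h_den (by simpa using hz)).congr' ?_
  filter_upwards [ht.eventually_gt_atTop 0] with j hj
  rw [Pi.div_apply, dilatedCoord]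
  field_simp

variable [MeasurableSpace E] [OpensMeasurableSpace E] {μ : Measure E} [l.IsCountablyGenerated]

theorem tendsto_mul_setIntegral_dilatedCoord_mul (ht : Tendsto t l atTop) (ℓ : StrongDual ℝ E)
    {f : ι → E → ℝ} {g bound : E → ℝ} {s : ι → Set E} (hs_meas : ∀ j, MeasurableSet (s j))
    (hs : ∀ z ≠ 0, ∀ᶠ j in l, z ∈ s j) (hf_meas : ∀ᶠ j in l, AEStronglyMeasurable (f j) μ)
    (hf_bound : ∀ᶠ j in l, ∀ᵐ z ∂μ, |f j z| ≤ bound z)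
    (hbound : Integrable (fun z => ‖z‖⁻¹ * bound z) μ)
    (hf_lim : ∀ᵐ z ∂μ, Tendsto (fun j => f j z) l (𝓝 (g z))) :
    Tendsto (fun j => t j * ∫ z in s j, dilatedCoord ℓ (t j) z * f j z ∂μ) l
      (𝓝 (∫ z, 2 * ℓ z / ‖z‖ ^ 2 * g z ∂μ)) := by
  simp_rw [← integral_const_mul, ← integral_indicator (hs_meas _), ← mul_assoc]
  refine tendsto_integral_filter_of_dominated_convergence
    (fun z => 2 * ‖ℓ‖ * (‖z‖⁻¹ * bound z)) ?_ ?_ (hbound.const_mul _) ?_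
  · filter_upwards [hf_meas] with j hj
    exact (((continuous_dilatedCoord ℓ (t j)).const_mul (t j)).aestronglyMeasurable.mul
      hj).indicator (hs_meas j)
  · filter_upwards [hf_bound] with j hj
    filter_upwards [hj] with z hz
    refine (norm_indicator_le_norm_self _ _).trans ?_
    calc ‖t j * dilatedCoord ℓ (t j) z * f j z‖
        = |t j * dilatedCoord ℓ (t j) z| * |f j z| := norm_mul _ _
      _ ≤ 2 * ‖ℓ‖ * ‖z‖⁻¹ * bound z := by
          gcongr
          exact abs_mul_dilatedCoord_le ℓ (t j) z
      _ = 2 * ‖ℓ‖ * (‖z‖⁻¹ * bound z) := mul_assoc _ _ _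
  · filter_upwards [hf_lim] with z hz
    rcases eq_or_ne z 0 with rfl | hz0
    · simp [Set.indicator, tendsto_const_nhds]
    refine ((tendsto_mul_dilatedCoord ht ℓ z).mul hz).congr' ?_
    filter_upwards [hs z hz0] with j hj
    rw [Set.indicator_of_mem hj]

end DilatedCoord

theorem blowup_first_moment_limit_general {E ι : Type*} [NormedAddCommGroup E] [NormedSpace ℝ E]
    [FiniteDimensional ℝ E] [MeasurableSpace E] [BorelSpace E] (μ : Measure E)
    [μ.IsAddHaarMeasure] (hE : 2 ≤ finrank ℝ E) {k : ℕ} (hk : finrank ℝ E ≤ 2 * k)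
    {l : Filter ι} [l.IsCountablyGenerated] {v : ι → E → ℝ} {C : ℝ}
    (hv_meas : ∀ᶠ j in l, AEStronglyMeasurable (v j) μ)
    (hv_le : ∀ᶠ j in l, ∀ᵐ z ∂μ, v j z ≤ C) {L : E → ℝ} (hL : L.Even)
    (hv_lim : ∀ᵐ z ∂μ, Tendsto (fun j => v j z) l (𝓝 (L z))) {t R : ι → ℝ}
    (ht : Tendsto t l atTop) (hR : Tendsto R l (𝓝 0)) (ℓ : StrongDual ℝ E) :
    Tendsto (fun j => t j * ∫ z in {z | R j < ‖z‖},
      dilatedCoord ℓ (t j) z * Real.exp (k * v j z) * (2 / (1 + ‖z‖ ^ 2)) ^ k ∂μ) l (𝓝 0) := by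
  have h_odd : Function.Odd fun z =>
      2 * ℓ z / ‖z‖ ^ 2 * (Real.exp (k * L z) * (2 / (1 + ‖z‖ ^ 2)) ^ k) := fun z => by
    simp only [map_neg, norm_neg, hL z]
    ring
  have h_bound : Integrable (fun z : E =>
      ‖z‖⁻¹ * (Real.exp (k * C) * (2 / (1 + ‖z‖ ^ 2)) ^ k)) μ := by
    refine ((integrable_inv_norm_mul_inv_one_add_norm_sq_pow hE hk μ).const_mul
      (Real.exp (k * C) * 2 ^ k)).congr (.of_forall fun z => ?_)
    simp only [div_pow]
    ring
  simp only [mul_assoc (dilatedCoord _ _ _)]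
  rw [← integral_eq_zero_of_odd h_odd μ]
  refine tendsto_mul_setIntegral_dilatedCoord_mul ht ℓ
    (fun j => measurableSet_lt measurable_const measurable_norm)
    (fun z hz => hR.eventually_lt_const (norm_pos_iff.2 hz)) ?_ ?_ h_bound ?_
  · filter_upwards [hv_meas] with j hj
    exact (Real.continuous_exp.comp_aestronglyMeasurable (hj.const_mul _)).mul
      (Measurable.aestronglyMeasurable (by fun_prop))
  · filter_upwards [hv_le] with j hj
    filter_upwards [hj] with z hz
    rw [abs_of_nonneg (by positivity)]
    gcongr
  · filter_upwards [hv_lim] with z hz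
    exact ((hz.const_mul (k : ℝ)).rexp).mul_const _

/-- Estimate (e2): if `v_j` is uniformly bounded and converges to a constant `L`
uniformly away from the origin, and `t_j → ∞`, then for every coordinate `h`,
`t_j ∫_{‖z‖ > M/t_j} (2 t_j z_h/(1+t_j²‖z‖²)) e^{4 v_j} (2/(1+‖z‖²))⁴ dz → 0`. -/
theorem blowup_first_moment_limit
    (v : ℕ → EuclideanSpace ℝ (Fin 4) → ℝ) (C : ℝ)
    (hmeas : ∀ j, Measurable (v j))
    (hbd : ∀ j z, |v j z| ≤ C)
    (L : ℝ)
    (hconv : ∀ δ : ℝ, 0 < δ →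
      TendstoUniformlyOn (fun j z => v j z) (fun _ => L) atTop
        {z : EuclideanSpace ℝ (Fin 4) | δ ≤ ‖z‖})
    (t : ℕ → ℝ) (ht : ∀ j, 0 < t j) (htop : Tendsto t atTop atTop)
    (M : ℝ) (hM : 0 < M) (h : Fin 4) :
    Tendsto
      (fun j => t j * ∫ z in {z : EuclideanSpace ℝ (Fin 4) | M / t j < ‖z‖},
        (2 * t j * z h / (1 + (t j) ^ 2 * ‖z‖ ^ 2)) *
          Real.exp (4 * v j z) * (2 / (1 + ‖z‖ ^ 2)) ^ 4)
      atTop (nhds 0) :=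
  blowup_first_moment_limit_general volume (k := 4) (by simp) (by simp)
    (.of_forall fun j => (hmeas j).aestronglyMeasurable)
    (.of_forall fun j => .of_forall fun z => (le_abs_self _).trans (hbd j z)) (.const L)
    ((Measure.ae_ne volume 0).mono fun z hz =>
      (hconv ‖z‖ (norm_pos_iff.2 hz)).tendsto_at (le_refl ‖z‖))
    htop (htop.const_div_atTop M) (EuclideanSpace.proj h)
end

section
/- For every M > 0 and every i ∈ {1,2,3,4}, the limit as t → ∞ of t² · ∫_{‖z‖ > M/t} (2 t z_i/(1 + t² ‖z‖²))² · ((t² ‖z‖² − 1)/(t² ‖z‖² + 1)) · (2/(1+‖z‖²))⁴ dz equals 16π²/3 (which equals the volume of the unit 3-sphere, 2π², times ∫₀^∞ 16 r/(1+r²)⁴ dr = 8/3). -/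
open MeasureTheory Filter Real
open scoped Topology

/-!
Let `w r = (2 / (1 + r²))⁴`. For `z ≠ 0`, `t²` times the integrand is
`q (t² ‖z‖²) · (2 zᵢ / ‖z‖²)² · w ‖z‖`, where `q x = (x / (1 + x))² · (x - 1) / (x + 1)` is bounded
by `1` on `x ≥ 0` and tends to `1` at infinity. Since the regions `‖z‖ > M / t` exhaust the
punctured space, dominated convergence gives the limit `∫ (2 zᵢ / ‖z‖²)² w ‖z‖`, which by the
symmetry between the `n = 4` coordinates is `(4 / n) ∫ w ‖z‖ / ‖z‖²`. Polar coordinates turn the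
last integral into `2π² ∫₀^∞ 16 r / (1 + r²)⁴ dr`.
-/

section DominatedConvergence

theorem aecover_lt_norm {α E : Type*} [NormedAddCommGroup E] [MeasurableSpace E]
    [OpensMeasurableSpace E] {μ : Measure E} [NullSingletonClass μ] {l : Filter α} {δ : α → ℝ}
    (hδ : Tendsto δ l (𝓝 0)) : AECover μ l fun a => {z : E | δ a < ‖z‖} where
  ae_eventually_mem := (μ.ae_ne 0).mono fun _ hz => hδ.eventually_lt_const (norm_pos_iff.2 hz)
  measurableSet _ := measurableSet_lt measurable_const measurable_norm

theorem tendsto_setIntegral_mul_of_aecover {α X : Type*} [MeasurableSpace X] {μ : Measure X}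
    {l : Filter α} [l.IsCountablyGenerated] {φ : α → Set X} (hφ : AECover μ l φ)
    {k : α → X → ℝ} {G : X → ℝ} (hk_meas : ∀ a, AEStronglyMeasurable (k a) μ)
    (hk_le : ∀ a x, |k a x| ≤ 1) (hk_lim : ∀ᵐ x ∂μ, Tendsto (k · x) l (𝓝 1))
    (hG : Integrable G μ) :
    Tendsto (fun a => ∫ x in φ a, k a x * G x ∂μ) l (𝓝 (∫ x, G x ∂μ)) := by
  refine Tendsto.congr (fun a => integral_indicator (hφ.measurableSet a)) ?_
  refine tendsto_integral_filter_of_dominated_convergence (fun x => ‖G x‖) ?_ ?_ hG.norm ?_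
  · exact .of_forall fun a =>
      ((hk_meas a).mul hG.aestronglyMeasurable).indicator (hφ.measurableSet a)
  · refine .of_forall fun a => .of_forall fun x => (norm_indicator_le_norm_self _ _).trans ?_
    rw [norm_mul]
    exact mul_le_of_le_one_left (norm_nonneg _) (hk_le a x)
  · filter_upwards [hk_lim, hφ.ae_eventually_mem] with x hx_lim hx_mem
    have hlim : Tendsto (fun a => k a x * G x) l (𝓝 (G x)) := by
      simpa only [one_mul] using hx_lim.mul_const (G x)
    exact hlim.congr' (hx_mem.mono fun a ha => (Set.indicator_of_mem ha _).symm)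

end DominatedConvergence

section DilationFactor

/-- The factor by which the moment `t² · (2 t zᵢ / (1 + t² ‖z‖²))² · (t² ‖z‖² - 1) / (t² ‖z‖² + 1)`
of the dilated point `t z` differs from its limit `(2 zᵢ / ‖z‖²)²` as `t → ∞`. It depends only on
`x = t² ‖z‖²`, and is meant for `x ≥ 0`. -/
noncomputable def dilationFactor (x : ℝ) : ℝ :=
  (x / (1 + x)) ^ 2 * ((x - 1) / (x + 1))

theorem measurable_dilationFactor : Measurable dilationFactor := by
  unfold dilationFactor
  fun_prop

theorem abs_dilationFactor_le_one {x : ℝ} (hx : 0 ≤ x) : |dilationFactor x| ≤ 1 := by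
  have hratio : x / (1 + x) ≤ 1 := div_le_one_of_le₀ (by linarith) (by positivity)
  have hheight : |(x - 1) / (x + 1)| ≤ 1 := by
    rw [abs_div, abs_of_pos (by positivity : 0 < x + 1)]
    exact div_le_one_of_le₀ (abs_le.2 ⟨by linarith, by linarith⟩) (by positivity)
  rw [dilationFactor, abs_mul, abs_of_nonneg (by positivity : 0 ≤ (x / (1 + x)) ^ 2)]
  exact mul_le_one₀ (pow_le_one₀ (by positivity) hratio) (abs_nonneg _) hheight

theorem tendsto_dilationFactor_atTop : Tendsto dilationFactor atTop (𝓝 1) := by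
  have hinv : Tendsto (fun x : ℝ => (1 + x)⁻¹) atTop (𝓝 0) :=
    tendsto_inv_atTop_zero.comp (tendsto_atTop_add_const_left _ 1 tendsto_id)
  have hlim : Tendsto (fun x : ℝ => (1 - (1 + x)⁻¹) ^ 2 * (1 - 2 * (1 + x)⁻¹)) atTop (𝓝 1) := by
    simpa using ((hinv.const_sub 1).pow 2).mul ((hinv.const_mul 2).const_sub 1)
  refine hlim.congr' ?_
  filter_upwards [eventually_ge_atTop 0] with x hx
  rw [dilationFactor]
  field

theorem sq_mul_dilated_moment_eq {t c : ℝ} (a : ℝ) (hc : 0 < c) :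
    t ^ 2 * ((2 * t * a / (1 + t ^ 2 * c)) ^ 2 * ((t ^ 2 * c - 1) / (t ^ 2 * c + 1))) =
      dilationFactor (t ^ 2 * c) * (2 * a / c) ^ 2 := by
  rw [dilationFactor]
  field

theorem tendsto_sq_mul_setIntegral_dilated_moment {E : Type*} [NormedAddCommGroup E]
    [MeasurableSpace E] [OpensMeasurableSpace E] {μ : Measure E} [NullSingletonClass μ]
    {φ : ℝ → Set E} (hφ : AECover μ atTop φ) {f ρ : E → ℝ}
    (hfρ : Integrable (fun z => (2 * f z / ‖z‖ ^ 2) ^ 2 * ρ z) μ) :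
    Tendsto
      (fun t : ℝ => t ^ 2 * ∫ z in φ t, (2 * t * f z / (1 + t ^ 2 * ‖z‖ ^ 2)) ^ 2 *
        ((t ^ 2 * ‖z‖ ^ 2 - 1) / (t ^ 2 * ‖z‖ ^ 2 + 1)) * ρ z ∂μ)
      atTop (𝓝 (∫ z, (2 * f z / ‖z‖ ^ 2) ^ 2 * ρ z ∂μ)) := by
  have hne : ∀ᵐ z ∂μ, 0 < ‖z‖ ^ 2 := (μ.ae_ne 0).mono fun z hz => by positivity
  have hlim : ∀ᵐ z ∂μ, Tendsto (fun t : ℝ => dilationFactor (t ^ 2 * ‖z‖ ^ 2)) atTop (𝓝 1) :=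
    hne.mono fun z hz => tendsto_dilationFactor_atTop.comp <|
      (tendsto_pow_atTop two_ne_zero).atTop_mul_const hz
  refine (tendsto_setIntegral_mul_of_aecover hφ
    (k := fun t z => dilationFactor (t ^ 2 * ‖z‖ ^ 2))
    (fun t => (measurable_dilationFactor.comp (by fun_prop)).aestronglyMeasurable)
    (fun t z => abs_dilationFactor_le_one (by positivity)) hlim hfρ).congr fun t => ?_
  rw [← integral_const_mul]
  refine integral_congr_ae (ae_restrict_of_ae (hne.mono fun z hz => ?_))
  simp only [← mul_assoc, ← sq_mul_dilated_moment_eq (f z) hz]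

end DilationFactor

section RadialSymmetry

variable {ι : Type*} [Fintype ι] {f : ℝ → ℝ}

theorem coord_sq_le_norm_sq (z : EuclideanSpace ℝ ι) (i : ι) : z i ^ 2 ≤ ‖z‖ ^ 2 :=
  sq_le_sq' (neg_le_of_abs_le (PiLp.norm_apply_le z i)) (le_of_abs_le (PiLp.norm_apply_le z i))

theorem integrable_coord_sq_mul_fun_norm
    (hf : Integrable fun z : EuclideanSpace ℝ ι => ‖z‖ ^ 2 * f ‖z‖) (i : ι) :
    Integrable fun z : EuclideanSpace ℝ ι => z i ^ 2 * f ‖z‖ := by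
  have hbdd : ∀ z : EuclideanSpace ℝ ι, ‖z i ^ 2 / ‖z‖ ^ 2‖ ≤ 1 := fun z => by
    rw [norm_of_nonneg (by positivity)]
    exact div_le_one_of_le₀ (coord_sq_le_norm_sq z i) (by positivity)
  refine (hf.bdd_mul (f := fun z => z i ^ 2 / ‖z‖ ^ 2)
    (Measurable.aestronglyMeasurable (by fun_prop)) (.of_forall hbdd)).congr
      (.of_forall fun z => ?_)
  rcases eq_or_ne z 0 with rfl | hz
  · simp
  · have : ‖z‖ ≠ 0 := norm_ne_zero_iff.2 hz
    field

theorem integral_coord_sq_mul_fun_norm_eq (f : ℝ → ℝ) (i j : ι) :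
    ∫ z : EuclideanSpace ℝ ι, z i ^ 2 * f ‖z‖ = ∫ z : EuclideanSpace ℝ ι, z j ^ 2 * f ‖z‖ := by
  classical
  let e := LinearIsometryEquiv.piLpCongrLeft 2 ℝ ℝ (Equiv.swap i j)
  have happly (z : EuclideanSpace ℝ ι) : e z i = z j := by
    simp [e, LinearIsometryEquiv.piLpCongrLeft_apply, Equiv.piCongrLeft']
  simpa [happly] using (e.measurePreserving.integral_comp e.toHomeomorph.measurableEmbedding
    fun z => z i ^ 2 * f ‖z‖).symm

theorem integral_coord_sq_mul_fun_norm
    (hf : Integrable fun z : EuclideanSpace ℝ ι => ‖z‖ ^ 2 * f ‖z‖) (i : ι) :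
    ∫ z : EuclideanSpace ℝ ι, z i ^ 2 * f ‖z‖ =
      (Fintype.card ι : ℝ)⁻¹ * ∫ z : EuclideanSpace ℝ ι, ‖z‖ ^ 2 * f ‖z‖ := by
  have : Nonempty ι := ⟨i⟩
  rw [eq_inv_mul_iff_mul_eq₀ (by positivity)]
  calc (Fintype.card ι : ℝ) * ∫ z : EuclideanSpace ℝ ι, z i ^ 2 * f ‖z‖
      = ∑ j : ι, ∫ z : EuclideanSpace ℝ ι, z j ^ 2 * f ‖z‖ := by
        simp [integral_coord_sq_mul_fun_norm_eq f _ i]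
    _ = ∫ z : EuclideanSpace ℝ ι, ∑ j : ι, z j ^ 2 * f ‖z‖ :=
        (integral_finsetSum _ fun j _ => integrable_coord_sq_mul_fun_norm hf j).symm
    _ = ∫ z : EuclideanSpace ℝ ι, ‖z‖ ^ 2 * f ‖z‖ := by
        simp only [← Finset.sum_mul, ← EuclideanSpace.real_norm_sq_eq]

end RadialSymmetry

section RadialIntegral

theorem hasDerivAt_neg_inv_one_add_sq_pow {n : ℕ} (hn : n ≠ 0) (r : ℝ) :
    HasDerivAt (fun r : ℝ => -(2 * n * (1 + r ^ 2) ^ n)⁻¹) (r / (1 + r ^ 2) ^ (n + 1)) r := by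
  have hbase : HasDerivAt (fun r : ℝ => 1 + r ^ 2) (2 * r) r := by
    simpa using (hasDerivAt_pow 2 r).const_add 1
  obtain ⟨k, rfl⟩ := Nat.exists_eq_succ_of_ne_zero hn
  refine (((hbase.fun_pow _).const_mul _).fun_inv (by positivity)).fun_neg.congr_deriv ?_
  simp only [Nat.succ_eq_add_one, Nat.add_sub_cancel]
  field

theorem tendsto_neg_inv_one_add_sq_pow {n : ℕ} (hn : n ≠ 0) :
    Tendsto (fun r : ℝ => -(2 * n * (1 + r ^ 2) ^ n)⁻¹) atTop (𝓝 0) := by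
  have hbase : Tendsto (fun r : ℝ => (1 + r ^ 2) ^ n) atTop atTop :=
    (tendsto_pow_atTop hn).comp
      (tendsto_atTop_add_const_left _ 1 (tendsto_pow_atTop two_ne_zero))
  simpa using (hbase.const_mul_atTop (by positivity : (0 : ℝ) < 2 * n)).inv_tendsto_atTop.neg

theorem integrableOn_Ioi_div_one_add_sq_pow {n : ℕ} (hn : n ≠ 0) :
    IntegrableOn (fun r : ℝ => r / (1 + r ^ 2) ^ (n + 1)) (Set.Ioi 0) :=
  integrableOn_Ioi_deriv_of_nonneg' (fun r _ => hasDerivAt_neg_inv_one_add_sq_pow hn r)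
    (fun r hr => div_nonneg (le_of_lt hr) (by positivity)) (tendsto_neg_inv_one_add_sq_pow hn)

theorem integral_Ioi_div_one_add_sq_pow {n : ℕ} (hn : n ≠ 0) :
    ∫ r in Set.Ioi (0 : ℝ), r / (1 + r ^ 2) ^ (n + 1) = (2 * n : ℝ)⁻¹ := by
  rw [integral_Ioi_of_hasDerivAt_of_tendsto'
    (fun r _ => hasDerivAt_neg_inv_one_add_sq_pow hn r)
    (integrableOn_Ioi_div_one_add_sq_pow hn) (tendsto_neg_inv_one_add_sq_pow hn)]
  simp

theorem integral_fun_norm_euclideanSpace_fin_four (f : ℝ → ℝ) :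
    ∫ z : EuclideanSpace ℝ (Fin 4), f ‖z‖ = 2 * π ^ 2 * ∫ r in Set.Ioi (0 : ℝ), r ^ 3 * f r := by
  have hball : volume.real (Metric.ball (0 : EuclideanSpace ℝ (Fin 4)) 1) = π ^ 2 / 2 := by
    rw [Measure.real, InnerProductSpace.volume_ball_of_dim_even (k := 2) (by simp)]
    simp [ENNReal.toReal_ofReal (by positivity : 0 ≤ π ^ 2 / 2)]
  rw [integral_fun_norm_addHaar volume f, hball]
  simp only [finrank_euclideanSpace, Fintype.card_fin, smul_eq_mul, nsmul_eq_mul]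
  push_cast
  ring

theorem cube_mul_stereographic_density_div_sq (r : ℝ) :
    r ^ 3 * ((2 / (1 + r ^ 2)) ^ 4 / r ^ 2) = 16 * (r / (1 + r ^ 2) ^ (3 + 1)) := by
  rcases eq_or_ne r 0 with rfl | hr
  · simp
  · field

theorem integrable_stereographic_density_div_norm_sq :
    Integrable fun z : EuclideanSpace ℝ (Fin 4) => (2 / (1 + ‖z‖ ^ 2)) ^ 4 / ‖z‖ ^ 2 := by
  rw [integrable_fun_norm_addHaar volume (f := fun r => (2 / (1 + r ^ 2)) ^ 4 / r ^ 2)]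
  simpa [IntegrableOn, cube_mul_stereographic_density_div_sq] using
    (integrableOn_Ioi_div_one_add_sq_pow three_ne_zero).const_mul 16

theorem integral_stereographic_density_div_norm_sq :
    ∫ z : EuclideanSpace ℝ (Fin 4), (2 / (1 + ‖z‖ ^ 2)) ^ 4 / ‖z‖ ^ 2 = 16 * π ^ 2 / 3 := by
  rw [integral_fun_norm_euclideanSpace_fin_four fun r => (2 / (1 + r ^ 2)) ^ 4 / r ^ 2]
  simp only [cube_mul_stereographic_density_div_sq]
  rw [integral_const_mul, integral_Ioi_div_one_add_sq_pow three_ne_zero]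
  push_cast
  ring

end RadialIntegral

theorem second_moment_asymptotics_general {ι : Type*} [Fintype ι] {w : ℝ → ℝ}
    (hw : Integrable fun z : EuclideanSpace ℝ ι => w ‖z‖ / ‖z‖ ^ 2) (M : ℝ) (i : ι) :
    Tendsto
      (fun t : ℝ => t ^ 2 * ∫ z in {z : EuclideanSpace ℝ ι | M / t < ‖z‖},
        (2 * t * z i / (1 + t ^ 2 * ‖z‖ ^ 2)) ^ 2 *
          ((t ^ 2 * ‖z‖ ^ 2 - 1) / (t ^ 2 * ‖z‖ ^ 2 + 1)) * w ‖z‖)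
      atTop (𝓝 (4 / Fintype.card ι * ∫ z : EuclideanSpace ℝ ι, w ‖z‖ / ‖z‖ ^ 2)) := by
  have : Nonempty ι := ⟨i⟩
  have hmoment (z : EuclideanSpace ℝ ι) :
      (2 * z i / ‖z‖ ^ 2) ^ 2 * w ‖z‖ = z i ^ 2 * (4 * w ‖z‖ / ‖z‖ ^ 4) := by
    ring
  have hradial (z : EuclideanSpace ℝ ι) :
      ‖z‖ ^ 2 * (4 * w ‖z‖ / ‖z‖ ^ 4) = 4 * (w ‖z‖ / ‖z‖ ^ 2) := by
    rcases eq_or_ne ‖z‖ 0 with hz | hz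
    · simp [hz]
    · field
  have hint : Integrable fun z : EuclideanSpace ℝ ι => ‖z‖ ^ 2 * (4 * w ‖z‖ / ‖z‖ ^ 4) := by
    simpa only [hradial] using hw.const_mul 4
  have hlim := tendsto_sq_mul_setIntegral_dilated_moment (f := fun z => z i)
    (aecover_lt_norm (tendsto_const_nhds.div_atTop tendsto_id : Tendsto (M / ·) atTop (𝓝 0)))
    ((integrable_coord_sq_mul_fun_norm (f := fun r => 4 * w r / r ^ 4) hint i).congr
      (.of_forall fun z => (hmoment z).symm))
  convert! hlim using 2
  simp only [hmoment, integral_coord_sq_mul_fun_norm (f := fun r => 4 * w r / r ^ 4) hint i,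
    hradial, integral_const_mul]
  ring

/-- The asymptotic computation (out2): for every `M > 0` and coordinate `i`,
`t² ∫_{‖z‖ > M/t} (2 t z_i/(1+t²‖z‖²))² ((t²‖z‖²−1)/(t²‖z‖²+1)) (2/(1+‖z‖²))⁴ dz
→ 16π²/3` as `t → ∞`. -/
theorem second_moment_asymptotics (M : ℝ) (hM : 0 < M) (i : Fin 4) :
    Tendsto
      (fun t : ℝ => t ^ 2 * ∫ z in {z : EuclideanSpace ℝ (Fin 4) | M / t < ‖z‖},
        (2 * t * z i / (1 + t ^ 2 * ‖z‖ ^ 2)) ^ 2 *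
          ((t ^ 2 * ‖z‖ ^ 2 - 1) / (t ^ 2 * ‖z‖ ^ 2 + 1)) *
          (2 / (1 + ‖z‖ ^ 2)) ^ 4)
      atTop (nhds (16 * π ^ 2 / 3)) := by
  simpa [integral_stereographic_density_div_norm_sq] using
    second_moment_asymptotics_general (w := fun r => (2 / (1 + r ^ 2)) ^ 4)
      integrable_stereographic_density_div_norm_sq M i
end

section
/- Let (f_j) be a sequence of measurable functions from ℝ⁴ to ℝ such that for some constant C one has |f_j(z)| ≤ C for all j and all z, and such that for every δ > 0, f_j converges to 0 uniformly on {z ∈ ℝ⁴ : ‖z‖ ≥ δ}. Let (t_j) be a sequence of positive reals with t_j → ∞, let M > 0, and let i ∈ {1,2,3,4}. Then t_j² · ∫_{‖z‖ > M/t_j} (2 t_j z_i/(1 + t_j² ‖z‖²))² · ((t_j² ‖z‖² − 1)/(t_j² ‖z‖² + 1)) · f_j(z) · (2/(1+‖z‖²))⁴ dz → 0 as j → ∞. -/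
open MeasureTheory Filter

/-!
For a linear functional `L` (here a coordinate) one has `|L z| ≤ ‖L‖ ‖z‖`, so the factor `t²` is
absorbed by the dilated coordinate: `|t · 2 t L z / (1 + t² ‖z‖²)| ≤ 2 ‖L‖ / ‖z‖`, uniformly in `t`.
The integrand is therefore dominated by `4 ‖L‖² ‖z‖⁻²` times the stereographic density times
`|f_j|`, and `‖z‖⁻²` is integrable near the origin in dimension at least three. Dominated
convergence concludes.
-/

section RadialIntegrability

lemma pow_le_one_add_sq_pow_s7 {y : ℝ} (hy : 0 ≤ y) {k m : ℕ} (hkm : k ≤ 2 * m) :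
    y ^ k ≤ (1 + y ^ 2) ^ m := by
  rcases le_total y 1 with hy_le | hy_ge
  · exact (pow_le_one₀ hy hy_le).trans (one_le_pow₀ (by nlinarith))
  · calc y ^ k ≤ y ^ (2 * m) := pow_le_pow_right₀ hy_ge hkm
      _ = (y ^ 2) ^ m := pow_mul y 2 m
      _ ≤ (1 + y ^ 2) ^ m := by gcongr; linarith

lemma pow_div_one_add_sq_pow_le {y : ℝ} (hy : 0 ≤ y) {k q : ℕ} (hkq : k + 2 ≤ 2 * q) :
    y ^ k / (1 + y ^ 2) ^ q ≤ (1 + y ^ 2)⁻¹ := by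
  obtain ⟨m, rfl⟩ : ∃ m, q = m + 1 := ⟨q - 1, by omega⟩
  have hpow : y ^ k ≤ (1 + y ^ 2) ^ m := pow_le_one_add_sq_pow_s7 hy (by omega)
  rw [div_le_iff₀ (by positivity), pow_succ' _ m, inv_mul_cancel_left₀ (by positivity)]
  exact hpow

variable {E : Type*} [NormedAddCommGroup E] [NormedSpace ℝ E] [FiniteDimensional ℝ E]
  [MeasurableSpace E] [BorelSpace E]

lemma integrable_inv_norm_pow_mul_inv_one_add_norm_sq_pow (μ : Measure E) [μ.IsAddHaarMeasure]
    {p q : ℕ} (hp : p < Module.finrank ℝ E) (hq : Module.finrank ℝ E < p + 2 * q) :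
    Integrable (fun z : E => (‖z‖ ^ p)⁻¹ * ((1 + ‖z‖ ^ 2) ^ q)⁻¹) μ := by
  have : Nontrivial E := Module.nontrivial_of_finrank_pos (R := ℝ) (by omega)
  rw [integrable_fun_norm_addHaar μ (f := fun r : ℝ => (r ^ p)⁻¹ * ((1 + r ^ 2) ^ q)⁻¹)]
  refine integrable_inv_one_add_sq.integrableOn.mono'
    (Measurable.aestronglyMeasurable (by fun_prop)) ?_
  filter_upwards [ae_restrict_mem measurableSet_Ioi] with r (hr : 0 < r)
  obtain ⟨k, hk⟩ : ∃ k, Module.finrank ℝ E - 1 = k + p :=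
    ⟨Module.finrank ℝ E - 1 - p, by omega⟩
  have hcancel : r ^ (k + p) * ((r ^ p)⁻¹ * ((1 + r ^ 2) ^ q)⁻¹) = r ^ k / (1 + r ^ 2) ^ q := by
    rw [pow_add]
    field_simp
  rw [hk, smul_eq_mul, hcancel, Real.norm_of_nonneg (by positivity)]
  exact pow_div_one_add_sq_pow_le hr.le (by omega)

lemma integrable_div_norm_sq_mul_two_div_one_add_norm_sq_pow (μ : Measure E)
    [μ.IsAddHaarMeasure] {m : ℕ} (hdim : 2 < Module.finrank ℝ E)
    (hm : Module.finrank ℝ E < 2 + 2 * m) (a : ℝ) :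
    Integrable (fun z : E => (a / ‖z‖) ^ 2 * (2 / (1 + ‖z‖ ^ 2)) ^ m) μ := by
  convert (integrable_inv_norm_pow_mul_inv_one_add_norm_sq_pow μ hdim hm).const_mul
    (a ^ 2 * 2 ^ m) using 2 with z
  simp only [div_eq_mul_inv, mul_pow, inv_pow]
  ring

end RadialIntegrability

section DominatedConvergence

open scoped Topology

variable {α X G H : Type*} [MeasurableSpace X] {μ : Measure X} [NormedAddCommGroup G]
  [NormedAddCommGroup H] {l : Filter α} {f : α → X → G} {g : X → ℝ} {C : ℝ}

lemma tendsto_integral_mul_norm_zero [l.IsCountablyGenerated] (hg : Integrable g μ)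
    (hmeas : ∀ᶠ j in l, AEStronglyMeasurable (f j) μ) (hbd : ∀ᶠ j in l, ∀ᵐ x ∂μ, ‖f j x‖ ≤ C)
    (hlim : ∀ᵐ x ∂μ, Tendsto (fun j => f j x) l (𝓝 0)) :
    Tendsto (fun j => ∫ x, g x * ‖f j x‖ ∂μ) l (𝓝 0) := by
  rw [← integral_zero X ℝ (μ := μ)]
  refine tendsto_integral_filter_of_dominated_convergence (fun x => ‖g x‖ * C) ?_ ?_
    (hg.norm.mul_const C) ?_
  · filter_upwards [hmeas] with j hj using hg.aestronglyMeasurable.mul hj.norm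
  · filter_upwards [hbd] with j hj
    filter_upwards [hj] with x hx
    rw [norm_mul, norm_norm]
    gcongr
  · filter_upwards [hlim] with x hx
    simpa using hx.norm.const_mul (g x)

lemma tendsto_setIntegral_zero_of_norm_le_mul_norm [NormedSpace ℝ H] [l.IsCountablyGenerated]
    (hg : Integrable g μ) (hmeas : ∀ᶠ j in l, AEStronglyMeasurable (f j) μ)
    (hbd : ∀ᶠ j in l, ∀ᵐ x ∂μ, ‖f j x‖ ≤ C)
    (hlim : ∀ᵐ x ∂μ, Tendsto (fun j => f j x) l (𝓝 0)) {F : α → X → H}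
    (hF : ∀ᶠ j in l, ∀ᵐ x ∂μ, ‖F j x‖ ≤ g x * ‖f j x‖) (S : α → Set X) :
    Tendsto (fun j => ∫ x in S j, F j x ∂μ) l (𝓝 0) := by
  refine squeeze_zero_norm' ?_ (tendsto_integral_mul_norm_zero hg hmeas hbd hlim)
  filter_upwards [hmeas, hbd, hF] with j hmeas_j hbd_j hF_j
  have hint : Integrable (fun x => g x * ‖f j x‖) μ :=
    hg.mul_bdd hmeas_j.norm (by simpa only [norm_norm] using hbd_j)
  have hnonneg : 0 ≤ᵐ[μ] fun x => g x * ‖f j x‖ := by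
    filter_upwards [hF_j] with x hx using (norm_nonneg _).trans hx
  calc ‖∫ x in S j, F j x ∂μ‖ ≤ ∫ x in S j, g x * ‖f j x‖ ∂μ :=
        norm_integral_le_of_norm_le hint.integrableOn (ae_restrict_of_ae hF_j)
    _ ≤ ∫ x, g x * ‖f j x‖ ∂μ := setIntegral_le_integral hint hnonneg

lemma ae_tendsto_of_tendstoUniformlyOn_le_norm {β : Type*} [UniformSpace β] [MeasurableSpace G]
    (ν : Measure G) [NullSingletonClass ν] {u : α → G → β} {v : G → β}
    (huv : ∀ δ : ℝ, 0 < δ → TendstoUniformlyOn u v l {z | δ ≤ ‖z‖}) :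
    ∀ᵐ z ∂ν, Tendsto (fun j => u j z) l (𝓝 (v z)) := by
  filter_upwards [ν.ae_ne 0] with z hz
  exact (huv ‖z‖ (norm_pos_iff.2 hz)).tendsto_at (le_refl ‖z‖)

end DominatedConvergence

section Kernel

lemma abs_sub_one_div_add_one_le_one {s : ℝ} (hs : 0 ≤ s) : |(s - 1) / (s + 1)| ≤ 1 := by
  rw [abs_div, abs_of_pos (by positivity : 0 < s + 1), div_le_one (by positivity), abs_le]
  constructor <;> linarith

-- At `r = 0` the hypothesis forces `x = 0`, matching the junk value `2 * a / 0 = 0`.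
lemma abs_mul_dilated_coord_le {x a r : ℝ} (hr : 0 ≤ r) (hx : |x| ≤ a * r) (t : ℝ) :
    |t * (2 * t * x / (1 + t ^ 2 * r ^ 2))| ≤ 2 * a / r := by
  rcases hr.eq_or_lt with rfl | hr
  · obtain rfl : x = 0 := by simpa using hx
    simp
  have ha : 0 ≤ a := nonneg_of_mul_nonneg_left ((abs_nonneg x).trans hx) hr
  calc |t * (2 * t * x / (1 + t ^ 2 * r ^ 2))|
      = 2 * t ^ 2 * |x| / (1 + t ^ 2 * r ^ 2) := by
        rw [← mul_div_assoc, abs_div, abs_of_pos (by positivity : 0 < 1 + t ^ 2 * r ^ 2),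
          show t * (2 * t * x) = 2 * t ^ 2 * x by ring, abs_mul,
          abs_of_nonneg (by positivity : 0 ≤ 2 * t ^ 2)]
    _ ≤ 2 * t ^ 2 * (a * r) / (1 + t ^ 2 * r ^ 2) := by gcongr
    _ ≤ 2 * a / r := by
        rw [div_le_div_iff₀ (by positivity) hr]
        linarith

variable {E : Type*} [NormedAddCommGroup E] [NormedSpace ℝ E]

lemma abs_sq_mul_second_moment_integrand_le (L : StrongDual ℝ E) (m : ℕ) (t c : ℝ) (z : E) :
    |t ^ 2 * ((2 * t * L z / (1 + t ^ 2 * ‖z‖ ^ 2)) ^ 2 *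
        ((t ^ 2 * ‖z‖ ^ 2 - 1) / (t ^ 2 * ‖z‖ ^ 2 + 1)) * c * (2 / (1 + ‖z‖ ^ 2)) ^ m)| ≤
      (2 * ‖L‖ / ‖z‖) ^ 2 * (2 / (1 + ‖z‖ ^ 2)) ^ m * |c| := by
  set A := 2 * t * L z / (1 + t ^ 2 * ‖z‖ ^ 2)
  set Q := (t ^ 2 * ‖z‖ ^ 2 - 1) / (t ^ 2 * ‖z‖ ^ 2 + 1)
  set W := (2 / (1 + ‖z‖ ^ 2)) ^ m
  have hA : |t * A| ≤ 2 * ‖L‖ / ‖z‖ :=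
    abs_mul_dilated_coord_le (norm_nonneg z) (L.le_opNorm z) t
  have hQ : |Q| ≤ 1 := abs_sub_one_div_add_one_le_one (by positivity)
  have hW : 0 ≤ W := by positivity
  calc |t ^ 2 * (A ^ 2 * Q * c * W)| = |t * A| ^ 2 * |Q| * W * |c| := by
        rw [show t ^ 2 * (A ^ 2 * Q * c * W) = (t * A) ^ 2 * Q * W * c by ring, abs_mul, abs_mul,
          abs_mul, abs_pow, abs_of_nonneg hW]
    _ ≤ (2 * ‖L‖ / ‖z‖) ^ 2 * 1 * W * |c| := by gcongr
    _ = (2 * ‖L‖ / ‖z‖) ^ 2 * W * |c| := by rw [mul_one]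

end Kernel

theorem second_moment_error_limit_general {α E : Type*} {l : Filter α} [l.IsCountablyGenerated]
    [NormedAddCommGroup E] [NormedSpace ℝ E] [FiniteDimensional ℝ E] [MeasurableSpace E]
    [BorelSpace E] (μ : Measure E) [μ.IsAddHaarMeasure] {m : ℕ}
    (hdim : 2 < Module.finrank ℝ E) (hm : Module.finrank ℝ E < 2 + 2 * m)
    {f : α → E → ℝ} {C : ℝ} (hmeas : ∀ᶠ j in l, AEStronglyMeasurable (f j) μ)
    (hbd : ∀ᶠ j in l, ∀ᵐ z ∂μ, |f j z| ≤ C)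
    (hlim : ∀ᵐ z ∂μ, Tendsto (fun j => f j z) l (nhds 0))
    (t : α → ℝ) (S : α → Set E) (L : StrongDual ℝ E) :
    Tendsto
      (fun j => (t j) ^ 2 * ∫ z in S j,
        (2 * t j * L z / (1 + (t j) ^ 2 * ‖z‖ ^ 2)) ^ 2 *
          (((t j) ^ 2 * ‖z‖ ^ 2 - 1) / ((t j) ^ 2 * ‖z‖ ^ 2 + 1)) *
          f j z * (2 / (1 + ‖z‖ ^ 2)) ^ m ∂μ)
      l (nhds 0) := by
  simp_rw [← integral_const_mul]
  exact tendsto_setIntegral_zero_of_norm_le_mul_norm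
    (integrable_div_norm_sq_mul_two_div_one_add_norm_sq_pow μ hdim hm (2 * ‖L‖)) hmeas hbd hlim
    (.of_forall fun j => .of_forall fun z =>
      abs_sq_mul_second_moment_integrand_le L m (t j) (f j z) z) S

/-- Estimate (out2'): if `f_j` is uniformly bounded and converges to `0` uniformly
away from the origin, and `t_j → ∞`, then
`t_j² ∫_{‖z‖ > M/t_j} (2 t_j z_i/(1+t_j²‖z‖²))² ((t_j²‖z‖²−1)/(t_j²‖z‖²+1)) f_j
(2/(1+‖z‖²))⁴ dz → 0`. -/
theorem second_moment_error_limit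
    (f : ℕ → EuclideanSpace ℝ (Fin 4) → ℝ) (C : ℝ)
    (hmeas : ∀ j, Measurable (f j))
    (hbd : ∀ j z, |f j z| ≤ C)
    (hconv : ∀ δ : ℝ, 0 < δ →
      TendstoUniformlyOn (fun j z => f j z) (fun _ => 0) atTop
        {z : EuclideanSpace ℝ (Fin 4) | δ ≤ ‖z‖})
    (t : ℕ → ℝ) (ht : ∀ j, 0 < t j) (htop : Tendsto t atTop atTop)
    (M : ℝ) (hM : 0 < M) (i : Fin 4) :
    Tendsto
      (fun j => (t j) ^ 2 * ∫ z in {z : EuclideanSpace ℝ (Fin 4) | M / t j < ‖z‖},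
        (2 * t j * z i / (1 + (t j) ^ 2 * ‖z‖ ^ 2)) ^ 2 *
          (((t j) ^ 2 * ‖z‖ ^ 2 - 1) / ((t j) ^ 2 * ‖z‖ ^ 2 + 1)) *
          f j z * (2 / (1 + ‖z‖ ^ 2)) ^ 4)
      atTop (nhds 0) := by
  exact second_moment_error_limit_general volume (by simp) (by simp)
    (.of_forall fun j => (hmeas j).aestronglyMeasurable)
    (.of_forall fun j => .of_forall (hbd j))
    (ae_tendsto_of_tendstoUniformlyOn_le_norm volume hconv) t _ (EuclideanSpace.proj i)
end

section
/- Let S⁴ be the unit sphere centered at the origin in ℝ⁵ = ℝ⁴ × ℝ, let N = (0,0,0,0,1), let μ be the 4-dimensional Hausdorff measure on ℝ⁵ restricted to S⁴, and let ι : ℝ⁴ → S⁴ \ {N} be the inverse stereographic parametrization ι(y) = (2y/(1+‖y‖²), (‖y‖²−1)/(‖y‖²+1)). For s > 0 define the conformal dilation φ_s : S⁴ → S⁴ by φ_s(N) = N and φ_s(x) = ι(s · ι⁻¹(x)) for x ≠ N. Then for every sequence (u_j) of measurable functions from S⁴ to ℝ with |u_j(x)| ≤ C for all j and x (C a fixed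 constant), and every sequence (t_j) of positive reals with t_j → ∞, the ℝ⁵-valued integrals satisfy ∫_{S⁴} e^{4 u_j(x)} φ_{1/t_j}(x) dμ(x) + (∫_{S⁴} e^{4 u_j(x)} dμ(x)) · N → 0 as j → ∞. -/
open MeasureTheory Filter

/-- The north pole `N = (0,0,0,0,1)` of the unit sphere `S⁴ ⊂ ℝ⁵`. -/
noncomputable def northPole : EuclideanSpace ℝ (Fin 5) :=
  EuclideanSpace.single (4 : Fin 5) (1 : ℝ)

/-- The inverse stereographic parametrization
`ι(y) = (2y/(1+‖y‖²), (‖y‖²−1)/(‖y‖²+1))` of `S⁴ \ {N}` by `ℝ⁴`. -/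
noncomputable def invStereo (y : EuclideanSpace ℝ (Fin 4)) : EuclideanSpace ℝ (Fin 5) :=
  (EuclideanSpace.equiv (Fin 5) ℝ).symm
    (Fin.snoc (fun i : Fin 4 => 2 * y i / (1 + ‖y‖ ^ 2))
      ((‖y‖ ^ 2 - 1) / (‖y‖ ^ 2 + 1)))

/-- The stereographic projection `ι⁻¹ : S⁴ \ {N} → ℝ⁴`, `x ↦ x'/(1 − x₅)`. -/
noncomputable def stereoProj (x : EuclideanSpace ℝ (Fin 5)) : EuclideanSpace ℝ (Fin 4) :=
  (EuclideanSpace.equiv (Fin 4) ℝ).symm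
    (fun i : Fin 4 => x i.castSucc / (1 - x (4 : Fin 5)))

open scoped Classical in
/-- The conformal dilation `φ_s` of `S⁴`: `φ_s(N) = N` and `φ_s(x) = ι(s · ι⁻¹(x))`
for `x ≠ N`. -/
noncomputable def confDil (s : ℝ) (x : EuclideanSpace ℝ (Fin 5)) :
    EuclideanSpace ℝ (Fin 5) :=
  if x = northPole then northPole else invStereo (s • stereoProj x)

/-! For a weight `w` with `|w| ≤ M`, the vector `∫ w φ_s + (∫ w) N = ∫ w (φ_s + N)` has norm at most
`M ∫ ‖φ_s + N‖`. Off `N`, the maps `φ_s` converge pointwise to `φ_0 = -N` as `s → 0`, and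
`‖φ_s + N‖ ≤ 2`, so this bound tends to zero by dominated convergence as soon as the measure is
finite and does not charge `N`. For `μH[4]` on `S⁴`, finiteness holds because stereographic charts
exhibit the compact sphere locally as a Lipschitz image of `ℝ⁴`. -/

open Metric Module
open scoped Topology

section HausdorffMeasure

variable {E F : Type*}
  [NormedAddCommGroup E] [MeasurableSpace E] [BorelSpace E]
  [NormedAddCommGroup F] [NormedSpace ℝ F] [FiniteDimensional ℝ F]

theorem exists_mem_nhds_hausdorffMeasure_image_lt_top_of_contDiffAt [NormedSpace ℝ E]
    {f : F → E} {a : F} (hf : ContDiffAt ℝ 1 f a) :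
    ∃ t ∈ 𝓝 a, μH[finrank ℝ F] (f '' t) < ⊤ := by
  borelize F
  obtain ⟨K, t, ht, hLip⟩ := hf.exists_lipschitzOnWith
  obtain ⟨r, hr, hrfin⟩ := (μH[finrank ℝ F] : Measure F).finiteAt_nhds a
  refine ⟨t ∩ r, inter_mem ht hr, ?_⟩
  calc μH[finrank ℝ F] (f '' (t ∩ r))
      ≤ (K : ENNReal) ^ (finrank ℝ F : ℝ) * μH[finrank ℝ F] (t ∩ r) :=
        (hLip.mono Set.inter_subset_left).hausdorffMeasure_image_le (Nat.cast_nonneg _)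
    _ < ⊤ := ENNReal.mul_lt_top
        (ENNReal.rpow_lt_top_of_nonneg (Nat.cast_nonneg _) ENNReal.coe_ne_top)
        ((measure_mono Set.inter_subset_right).trans_lt hrfin)

theorem hausdorffMeasure_unitSphere_lt_top [InnerProductSpace ℝ E] {n : ℕ}
    (hE : finrank ℝ E = n + 1) : μH[n] (sphere (0 : E) 1) < ⊤ := by
  have : Fact (finrank ℝ E = n + 1) := ⟨hE⟩
  have : FiniteDimensional ℝ E := .of_fact_finrank_eq_succ n
  refine (isCompact_sphere 0 1).measure_lt_top_of_nhdsWithin fun x hx => ?_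
  obtain ⟨v, hv, y, rfl⟩ : ∃ v : E, ∃ hv : ‖v‖ = 1, ∃ y, ((stereographic hv).symm y : E) = x := by
    lift x to sphere (0 : E) 1 using hx
    have hx : x ∈ Set.range (stereographic (norm_eq_of_mem_sphere (-x))).symm := by
      rw [range_stereographic_symm _ (-x).2]
      exact ne_neg_of_mem_unit_sphere ℝ x
    exact ⟨_, _, hx.imp fun y hy => congrArg Subtype.val hy⟩
  have hfinrank : finrank ℝ (ℝ ∙ v)ᗮ = n :=
    Submodule.finrank_orthogonal_span_singleton (norm_ne_zero_iff.1 (hv ▸ one_ne_zero))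
  have hcontDiff : ContDiff ℝ 1 fun z => ((stereographic hv).symm z : E) :=
    contDiff_stereoInvFunAux.comp (ℝ ∙ v)ᗮ.subtypeL.contDiff
  obtain ⟨t, ht, ht_fin⟩ :=
    exists_mem_nhds_hausdorffMeasure_image_lt_top_of_contDiffAt (hcontDiff.contDiffAt (x := y))
  refine ⟨(fun z => ((stereographic hv).symm z : E)) '' t, ?_, hfinrank ▸ ht_fin⟩
  rw [← map_nhds_subtype_val, ← Set.image_image]
  exact image_mem_map ((isOpenEmbedding_stereographic_symm hv).isOpenMap.image_mem_nhds ht)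

end HausdorffMeasure

theorem norm_integral_smul_add_integral_smul_le {α 𝕜 E : Type*} {_ : MeasurableSpace α}
    [RCLike 𝕜] [NormedAddCommGroup E] [NormedSpace ℝ E] [NormedSpace 𝕜 E] [CompleteSpace E]
    {ν : Measure α} [IsFiniteMeasure ν] {w : α → 𝕜} {f : α → E} {M : ℝ}
    (hw : AEStronglyMeasurable w ν) (hwM : ∀ᵐ x ∂ν, ‖w x‖ ≤ M) (hf : Integrable f ν) (c : E) :
    ‖(∫ x, w x • f x ∂ν) + (∫ x, w x ∂ν) • c‖ ≤ M * ∫ x, ‖f x + c‖ ∂ν := by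
  have hwf : Integrable (fun x => w x • f x) ν := hf.bdd_smul M hw hwM
  have hwc : Integrable (fun x => w x • c) ν := (Integrable.of_bound hw M hwM).smul_const c
  calc ‖(∫ x, w x • f x ∂ν) + (∫ x, w x ∂ν) • c‖
      = ‖∫ x, w x • (f x + c) ∂ν‖ := by
        simp_rw [smul_add, integral_add hwf hwc, integral_smul_const]
    _ ≤ ∫ x, M * ‖f x + c‖ ∂ν := by
        refine norm_integral_le_of_norm_le
          ((hf.add (integrable_const c)).norm.const_mul M) ?_
        filter_upwards [hwM] with x hx
        rw [norm_smul]
        gcongr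
    _ = M * ∫ x, ‖f x + c‖ ∂ν := integral_const_mul _ _

theorem norm_northPole : ‖northPole‖ = 1 := by simp [northPole]

section InvStereo

variable (y : EuclideanSpace ℝ (Fin 4))

theorem invStereo_castSucc (i : Fin 4) :
    invStereo y i.castSucc = 2 * y i / (1 + ‖y‖ ^ 2) := by
  simp [invStereo]

theorem invStereo_last :
    invStereo y (Fin.last 4) = (‖y‖ ^ 2 - 1) / (‖y‖ ^ 2 + 1) :=
  Fin.snoc_last (α := fun _ => ℝ) _ fun i => 2 * y i / (1 + ‖y‖ ^ 2)

theorem norm_invStereo : ‖invStereo y‖ = 1 := by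
  rw [← sq_eq_sq₀ (norm_nonneg _) zero_le_one, EuclideanSpace.real_norm_sq_eq,
    Fin.sum_univ_castSucc, invStereo_last]
  simp_rw [invStereo_castSucc, div_pow, mul_pow]
  rw [← Finset.sum_div, ← Finset.mul_sum, ← EuclideanSpace.real_norm_sq_eq]
  field_simp
  ring

theorem invStereo_zero : invStereo 0 = -northPole := by
  ext i
  induction i using Fin.lastCases with
  | last => rw [invStereo_last]; simp [northPole]
  | cast i =>
    have hi : i.castSucc ≠ 4 := (Fin.castSucc_lt_last i).ne
    simp [invStereo_castSucc, northPole, hi]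

theorem continuous_invStereo : Continuous invStereo := by
  refine (EuclideanSpace.equiv (Fin 5) ℝ).symm.continuous.comp (Continuous.finSnoc ?_ ?_)
  · exact continuous_pi fun i => Continuous.div (by fun_prop) (by fun_prop) fun y => by positivity
  · exact Continuous.div (by fun_prop) (by fun_prop) fun y => by positivity

end InvStereo

theorem measurable_stereoProj : Measurable stereoProj :=
  (EuclideanSpace.equiv (Fin 4) ℝ).symm.continuous.measurable.comp <|
    measurable_pi_lambda _ fun i => Measurable.div (by fun_prop) (by fun_prop)

section ConfDil

variable {x : EuclideanSpace ℝ (Fin 5)}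

theorem confDil_of_ne_northPole (s : ℝ) (hx : x ≠ northPole) :
    confDil s x = invStereo (s • stereoProj x) :=
  if_neg hx

theorem norm_confDil (s : ℝ) (x : EuclideanSpace ℝ (Fin 5)) : ‖confDil s x‖ = 1 := by
  unfold confDil
  split_ifs
  exacts [norm_northPole, norm_invStereo _]

theorem measurable_confDil (s : ℝ) : Measurable (confDil s) :=
  Measurable.ite (measurableSet_singleton _) measurable_const
    (continuous_invStereo.measurable.comp (measurable_stereoProj.const_smul s))

theorem integrable_confDil (s : ℝ) (ν : Measure (EuclideanSpace ℝ (Fin 5)))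
    [IsFiniteMeasure ν] : Integrable (confDil s) ν :=
  .of_bound (measurable_confDil s).aestronglyMeasurable 1
    (ae_of_all _ fun x => (norm_confDil s x).le)

theorem tendsto_confDil_nhds_zero (hx : x ≠ northPole) :
    Tendsto (fun s => confDil s x) (𝓝 0) (𝓝 (-northPole)) := by
  simp_rw [confDil_of_ne_northPole _ hx]
  have hcont : Continuous fun s : ℝ => invStereo (s • stereoProj x) :=
    continuous_invStereo.comp (by fun_prop)
  exact hcont.tendsto' 0 _ (by rw [zero_smul, invStereo_zero])

theorem norm_confDil_add_northPole_le (s : ℝ) (x : EuclideanSpace ℝ (Fin 5)) :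
    ‖confDil s x + northPole‖ ≤ 2 :=
  calc ‖confDil s x + northPole‖ ≤ ‖confDil s x‖ + ‖northPole‖ := norm_add_le _ _
    _ = 2 := by rw [norm_confDil, norm_northPole, one_add_one_eq_two]

theorem tendsto_integral_norm_confDil_add_northPole
    {ν : Measure (EuclideanSpace ℝ (Fin 5))} [IsFiniteMeasure ν] (hN : ν {northPole} = 0) :
    Tendsto (fun s => ∫ x, ‖confDil s x + northPole‖ ∂ν) (𝓝 0) (𝓝 0) := by
  rw [← integral_zero (EuclideanSpace ℝ (Fin 5)) ℝ (μ := ν)]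
  refine tendsto_integral_filter_of_dominated_convergence (fun _ => 2)
    (.of_forall fun s => ((measurable_confDil s).add_const _).norm.aestronglyMeasurable)
    (.of_forall fun s => ae_of_all _ fun x => ?_) (integrable_const _) ?_
  · rw [norm_norm]
    exact norm_confDil_add_northPole_le s x
  · filter_upwards [measure_eq_zero_iff_ae_notMem.1 hN] with x hx
    simpa using ((tendsto_confDil_nhds_zero hx).add_const northPole).norm

end ConfDil

theorem confDil_concentration_general {ι : Type*} {l : Filter ι}
    {ν : Measure (EuclideanSpace ℝ (Fin 5))}
    (hν : ν (sphere 0 1) < ⊤) (hN : ν {northPole} = 0)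
    {w : ι → EuclideanSpace ℝ (Fin 5) → ℝ} {M : ℝ}
    (hw : ∀ i, AEStronglyMeasurable (w i) (ν.restrict (sphere 0 1)))
    (hwM : ∀ i, ∀ x ∈ sphere (0 : EuclideanSpace ℝ (Fin 5)) 1, |w i x| ≤ M)
    {s : ι → ℝ} (hs : Tendsto s l (𝓝 0)) :
    Tendsto
      (fun i => (∫ x in sphere 0 1, w i x • confDil (s i) x ∂ν) +
        (∫ x in sphere 0 1, w i x ∂ν) • northPole)
      l (𝓝 0) := by
  have : IsFiniteMeasure (ν.restrict (sphere 0 1)) := isFiniteMeasure_restrict.2 hν.ne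
  have hN_restrict : ν.restrict (sphere 0 1) {northPole} = 0 :=
    Measure.absolutelyContinuous_of_le Measure.restrict_le_self hN
  have hbound := ((tendsto_integral_norm_confDil_add_northPole hN_restrict).comp hs).const_mul M
  rw [mul_zero] at hbound
  exact squeeze_zero_norm (fun i => norm_integral_smul_add_integral_smul_le (hw i)
    (ae_restrict_of_forall_mem isClosed_sphere.measurableSet (hwM i))
    (integrable_confDil (s i) _) northPole) hbound

/-- Concentration of the conformal dilations: for uniformly bounded measurable `u_j`
on `S⁴` and `t_j → ∞`,
`∫_{S⁴} e^{4u_j(x)} φ_{1/t_j}(x) dμ(x) + (∫_{S⁴} e^{4u_j(x)} dμ(x)) · N → 0`,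
where `μ` is the 4-dimensional Hausdorff measure restricted to `S⁴`. -/
theorem confDil_concentration
    (u : ℕ → EuclideanSpace ℝ (Fin 5) → ℝ) (C : ℝ)
    (hmeas : ∀ j, Measurable (u j))
    (hbd : ∀ j, ∀ x ∈ Metric.sphere (0 : EuclideanSpace ℝ (Fin 5)) 1, |u j x| ≤ C)
    (t : ℕ → ℝ) (ht : ∀ j, 0 < t j) (htop : Tendsto t atTop atTop) :
    Tendsto
      (fun j =>
        (∫ x in Metric.sphere (0 : EuclideanSpace ℝ (Fin 5)) 1,
            Real.exp (4 * u j x) • confDil (1 / t j) x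
          ∂(μH[4] : Measure (EuclideanSpace ℝ (Fin 5)))) +
        (∫ x in Metric.sphere (0 : EuclideanSpace ℝ (Fin 5)) 1,
            Real.exp (4 * u j x)
          ∂(μH[4] : Measure (EuclideanSpace ℝ (Fin 5)))) • northPole)
      atTop (nhds 0) := by
  have := Measure.nullSingletonClass_hausdorff (EuclideanSpace ℝ (Fin 5)) four_pos
  refine confDil_concentration_general (M := Real.exp (4 * C))
    (mod_cast hausdorffMeasure_unitSphere_lt_top (n := 4) finrank_euclideanSpace_fin)
    (measure_singleton _) (fun j => ((hmeas j).const_mul 4).exp.aestronglyMeasurable)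
    (fun j x hx => ?_) (htop.const_div_atTop 1)
  rw [Real.abs_exp]
  gcongr
  exact (le_abs_self _).trans (hbd j x hx)
end
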